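/- arXiv:2404.08502 — 7 statements merged into one kernel-verified Lean document; each statement's English description precedes it below -/
import Mathlib

section
/- Let Q₁, Q₂ be squarefree positive integers, Q₀ = gcd(Q₁,Q₂), and let χ₁, ψ₁ be Dirichlet characters to moduli dividing Q₁ and χ₂, ψ₂ Dirichlet characters to moduli dividing Q₂. For (a,b;c,d) ∈ SL₂(ℤ) set α((a,b;c,d)) = χ₁(a)ψ₁(b)χ₂(c)ψ₂(d), and for σ ∈ SL₂(ℤ) put w(σ) = Σ_{τ} α(τσ)·conj(α(τ)) where τ runs over a complete set of representatives of Γ₂(Q₁,Q₂)\SL₂(ℤ) (the summand α(τσ)·conj(α(τ)) depends only on the coset Γ₂(Q₁,Q₂)τ, so w(σ) is well defined). Then for every ε > 0 there is a constant c(ε) > 0 such that for all C, B ≥ 1: Σ_{0 < |c| ≤ C} |w((±1,0;c,±1))| ≤ c(ε) · C · (Q₁Q₂)^{1+ε} · Π over primes p ∣ Q_j with p ∤ Q₀ of cond(χ_j;p)⁻¹ · Π over primes p ∣ Q₀ of (max_j cond(χ_j;p))⁻¹, and Σ_{0 < |b| ≤ B} |w((±1,b;0,±1))| ≤ c(ε)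 · B · (Q₁Q₂)^{1+ε} · Π over primes p ∣ Q_j with p ∤ Q₀ of cond(ψ_j;p)⁻¹ · Π over primes p ∣ Q₀ of (max_j cond(ψ_j;p))⁻¹. -/
open scoped BigOperators

/-- Membership in `Γ₂(q₁,q₂)`: an integer matrix of determinant one with
`q₁ ∣ b` and `q₂ ∣ c`. -/
def InGamma2 (q₁ q₂ : ℕ) (γ : Matrix (Fin 2) (Fin 2) ℤ) : Prop :=
  γ.det = 1 ∧ (q₁ : ℤ) ∣ γ 0 1 ∧ (q₂ : ℤ) ∣ γ 1 0

/-- Local conductor `cond(χ;p)`: the largest power of `p` dividing the conductor of `χ`. -/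
noncomputable def localCond {m : ℕ} (χ : DirichletCharacter ℂ m) (p : ℕ) : ℕ :=
  p ^ ((DirichletCharacter.conductor χ).factorization p)

namespace WB

lemma sqf_dvd {m : ℕ} (hm : Squarefree m) {z : ℤ}
    (h : ∀ q : ℕ, q.Prime → q ∣ m → (q : ℤ) ∣ z) : (m : ℤ) ∣ z := by
  rw [← Nat.prod_primeFactors_of_squarefree hm, Nat.cast_prod]
  apply Finset.prod_dvd_of_coprime
  · intro p hp q hq hpq
    exact Nat.isCoprime_iff_coprime.mpr ((Nat.coprime_primes (Nat.prime_of_mem_primeFactors hp)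
      (Nat.prime_of_mem_primeFactors hq)).mpr hpq)
  · intro p hp
    exact h p (Nat.prime_of_mem_primeFactors hp) (Nat.dvd_of_mem_primeFactors hp)

lemma crt (P : Finset ℕ) (hP : ∀ p ∈ P, p.Prime) (r : ℕ → ℤ) :
    ∃ k : ℤ, ∀ p ∈ P, (p : ℤ) ∣ k - r p := by
  obtain ⟨k, hk⟩ := Nat.chineseRemainderOfFinset (fun p => (r p % p).toNat) (fun p => p) P
    (fun p hp => (hP p hp).ne_zero)
    (fun p hp q hq hpq => (Nat.coprime_primes (hP p hp) (hP q hq)).mpr hpq)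
  refine ⟨k, fun p hp => ?_⟩
  have h1 := (Nat.modEq_iff_dvd.mp (hk p hp).symm)
  have hp0 : (p : ℤ) ≠ 0 := by exact_mod_cast (hP p hp).ne_zero
  rw [Int.toNat_of_nonneg (Int.emod_nonneg _ hp0)] at h1
  have h2 : (p : ℤ) ∣ r p % p - r p := by
    rw [Int.emod_def]; exact ⟨-(r p / p), by ring⟩
  have := dvd_add h1 h2
  simpa using this

lemma hom_norm {p : ℕ} (hp : p.Prime) (f : ZMod p →* ℂ) {x : ZMod p} (hx : x ≠ 0) :
    ‖f x‖ = 1 := by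
  have := Fact.mk hp
  have h : x ^ (p - 1) = 1 := ZMod.pow_card_sub_one_eq_one hx
  have h2 : f x ^ (p - 1) = 1 := by rw [← map_pow, h, map_one]
  exact Complex.norm_eq_one_of_pow_eq_one h2 (by have := hp.two_le; omega)

lemma mul_self_eq {z : ℂ} (h : z * z = z) : z = 0 ∨ z = 1 := by
  have : z * (z - 1) = 0 := by rw [mul_sub, h]; ring
  rcases mul_eq_zero.mp this with h | h
  · exact Or.inl h
  · exact Or.inr (sub_eq_zero.mp h)

lemma hom_norm_le {p : ℕ} (hp : p.Prime) (f : ZMod p →* ℂ) (x : ZMod p) :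
    ‖f x‖ ≤ 1 := by
  by_cases hx : x = 0
  · subst hx
    have h : f 0 * f 0 = f 0 := by rw [← map_mul, mul_zero]
    rcases mul_self_eq h with h | h
    · simp [h]
    · simp [h]
  · exact (hom_norm hp f hx).le

lemma loc_one {m : ℕ} (hm : Squarefree m) (χ : DirichletCharacter ℂ m)
    {p : ℕ} (hp : p.Prime) :
    ∃ (f : ZMod p →* ℂ) (E : ℤ), (p ∣ m → (p : ℤ) ∣ E - 1) ∧
      (∀ q : ℕ, q.Prime → q ∣ m → q ≠ p → (q : ℤ) ∣ E) ∧
      ∀ x : ℤ, f x = χ ((1 + E * (x - 1) : ℤ) : ZMod m) := by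
  have := Fact.mk hp
  obtain ⟨E, hE⟩ := crt m.primeFactors (fun q hq => Nat.prime_of_mem_primeFactors hq)
    (fun q => if q = p then 1 else 0)
  have hm0 : m ≠ 0 := hm.ne_zero
  have h1 : p ∣ m → (p : ℤ) ∣ E - 1 := fun h => by
    simpa using hE p (Nat.mem_primeFactors.mpr ⟨hp, h, hm0⟩)
  have h2 : ∀ q : ℕ, q.Prime → q ∣ m → q ≠ p → (q : ℤ) ∣ E := fun q hq hqm hqp => by
    simpa [hqp] using hE q (Nat.mem_primeFactors.mpr ⟨hq, hqm, hm0⟩)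
  have key : ∀ x y : ℤ, (p : ℤ) ∣ x - y →
      ((1 + E * (x - 1) : ℤ) : ZMod m) = ((1 + E * (y - 1) : ℤ) : ZMod m) := by
    intro x y hxy
    rw [ZMod.intCast_eq_intCast_iff_dvd_sub]
    apply sqf_dvd hm
    intro q hq hqm
    have e : (1 + E * (y - 1) - (1 + E * (x - 1))) = E * (-(x - y)) := by ring
    rw [e]
    by_cases hqp : q = p
    · subst hqp; exact ((dvd_neg).mpr hxy).mul_left _
    · exact (h2 q hq hqm hqp).mul_right _
  have val : ∀ x : ℤ, (p : ℤ) ∣ ((x : ZMod p).val : ℤ) - x := by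
    intro x
    rw [← ZMod.intCast_eq_intCast_iff_dvd_sub]
    simp
  refine ⟨⟨⟨fun x => χ ((1 + E * ((x.val : ℤ) - 1) : ℤ) : ZMod m), ?_⟩, ?_⟩, E, h1, h2, ?_⟩
  · have := key _ _ (val 1)
    simp only [Int.cast_one] at this
    rw [this]; simp
  · intro x y
    simp only
    rw [← map_mul, ← Int.cast_mul]
    congr 1
    have := key _ _ (val ((x.val : ℤ) * (y.val : ℤ)))
    simp only [Int.cast_mul, Int.cast_natCast, ZMod.natCast_zmod_val] at this
    rw [this, ZMod.intCast_eq_intCast_iff_dvd_sub]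
    apply sqf_dvd hm
    intro q hq hqm
    have e : (1 + E * ((x.val : ℤ) - 1)) * (1 + E * ((y.val : ℤ) - 1)) -
      (1 + E * ((x.val : ℤ) * (y.val : ℤ) - 1)) =
      E * ((E - 1) * (((x.val : ℤ) - 1) * ((y.val : ℤ) - 1))) := by ring
    rw [e]
    by_cases hqp : q = p
    · subst hqp; exact ((h1 hqm).mul_right _).mul_left _
    · exact (h2 q hq hqm hqp).mul_right _
  · intro x
    show χ _ = _
    rw [key _ _ (val x)]

lemma exists_local {m : ℕ} (hm : Squarefree m) (χ : DirichletCharacter ℂ m) :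
    ∃ loc : (p : ℕ) → (ZMod p →* ℂ),
      (∀ p, p.Prime → ¬ p ∣ m → ∀ x, loc p x = 1) ∧
      (∀ P : Finset ℕ, (∀ p ∈ P, p.Prime) → m.primeFactors ⊆ P → ∀ x : ℤ,
        χ (x : ZMod m) = ∏ p ∈ P, loc p (x : ZMod p)) ∧
      (∀ p, p.Prime → p ∣ χ.conductor → ∃ u : ZMod p, u ≠ 0 ∧ loc p u ≠ 1) := by
  have hm0 : m ≠ 0 := hm.ne_zero
  have : NeZero m := ⟨hm0⟩
  have H : ∀ p : ℕ, ∃ (f : ZMod p →* ℂ) (E : ℤ), p.Prime → (p ∣ m → (p : ℤ) ∣ E - 1) ∧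
      (∀ q : ℕ, q.Prime → q ∣ m → q ≠ p → (q : ℤ) ∣ E) ∧
      ∀ x : ℤ, f x = χ ((1 + E * (x - 1) : ℤ) : ZMod m) := by
    intro p
    by_cases hp : p.Prime
    · obtain ⟨f, E, h⟩ := loc_one hm χ hp
      exact ⟨f, E, fun _ => h⟩
    · exact ⟨1, 0, fun h => absurd h hp⟩
  choose loc E h using H
  refine ⟨loc, ?_, ?_, ?_⟩
  · intro p hp hpm x
    obtain ⟨x, rfl⟩ := ZMod.intCast_surjective x
    rw [(h p hp).2.2 x]
    have : ((E p : ℤ) : ZMod m) = 0 := by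
      rw [ZMod.intCast_zmod_eq_zero_iff_dvd]
      apply sqf_dvd hm
      intro q hq hqm
      exact (h p hp).2.1 q hq hqm (by rintro rfl; exact hpm hqm)
    push_cast
    rw [this]; simp
  · intro P hP hsub x
    have : ∏ p ∈ P, loc p (x : ZMod p) = ∏ p ∈ P, χ ((1 + E p * (x - 1) : ℤ) : ZMod m) :=
      Finset.prod_congr rfl fun p hp => (h p (hP p hp)).2.2 x
    rw [this, ← map_prod, ← Int.cast_prod]
    congr 1
    rw [ZMod.intCast_eq_intCast_iff_dvd_sub]
    apply sqf_dvd hm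
    intro q hq hqm
    have hqP : q ∈ P := hsub (Nat.mem_primeFactors.mpr ⟨hq, hqm, hm0⟩)
    rw [← ZMod.intCast_eq_intCast_iff_dvd_sub, Int.cast_prod, Finset.prod_eq_single q]
    · have : ((E q : ℤ) : ZMod q) = 1 := by
        have := (ZMod.intCast_zmod_eq_zero_iff_dvd _ _).mpr ((h q hq).1 hqm)
        push_cast at this
        exact sub_eq_zero.mp this
      push_cast
      rw [this]; ring
    · intro p hp hpq
      have := (ZMod.intCast_zmod_eq_zero_iff_dvd _ _).mpr ((h p (hP p hp)).2.1 q hq hqm hpq.symm)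
      push_cast
      rw [this]; ring
    · exact fun h => absurd hqP h
  · intro p hp hpc
    by_contra hcon
    push Not at hcon
    have := Fact.mk hp
    have hpm : p ∣ m := hpc.trans χ.conductor_dvd_level
    obtain ⟨d, rfl⟩ := hpm
    have hcop : Nat.Coprime p d := Nat.coprime_of_squarefree_mul hm
    have hd : d ∣ p * d := Dvd.intro_left p rfl
    have hf : χ.FactorsThrough d := by
      rw [DirichletCharacter.factorsThrough_iff_ker_unitsMap hd]
      intro u hu
      rw [MonoidHom.mem_ker] at hu ⊢
      obtain ⟨x, hx⟩ := ZMod.intCast_surjective (u : ZMod (p * d))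
      have hxd : (d : ℤ) ∣ 1 - x := by
        rw [← ZMod.intCast_eq_intCast_iff_dvd_sub]
        have := congrArg Units.val hu
        rw [ZMod.unitsMap_val, ← hx] at this
        simpa using this
      have hxu : ((1 + E p * (x - 1) : ℤ) : ZMod (p * d)) = x := by
        rw [ZMod.intCast_eq_intCast_iff_dvd_sub]
        apply sqf_dvd hm
        intro q hq hqm
        have e : x - (1 + E p * (x - 1)) = (1 - x) * (E p - 1) := by ring
        rw [e]
        by_cases hqp : q = p
        · subst hqp; exact ((h q hq).1 hqm).mul_left _
        · have : q ∣ d := by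
            rcases (Nat.Prime.dvd_mul hq).mp hqm with h' | h'
            · exact absurd ((Nat.prime_dvd_prime_iff_eq hq hp).mp h') hqp
            · exact h'
          exact ((Int.natCast_dvd_natCast.mpr this).trans hxd).mul_right _
      have hx0 : (x : ZMod p) ≠ 0 := by
        intro h0
        have hdv : (p : ℤ) ∣ x := (ZMod.intCast_zmod_eq_zero_iff_dvd _ _).mp h0
        have hu' : IsUnit ((x : ℤ) : ZMod (p * d)) := hx ▸ u.isUnit
        have := hu'.map (ZMod.castHom (Dvd.intro d rfl : p ∣ p * d) (ZMod p))
        simp only [map_intCast] at this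
        rw [h0] at this
        exact not_isUnit_zero this
      have := hcon (x : ZMod p) hx0
      rw [(h p hp).2.2 x, hxu, hx] at this
      ext
      simpa using this
    have := χ.conductor_dvd_of_mem_conductorSet hf
    have h1 := Nat.dvd_gcd dvd_rfl (hpc.trans this)
    rw [hcop] at h1
    exact hp.one_lt.ne' (Nat.dvd_one.mp h1)

lemma exists_coprime_lift (c d N : ℤ) (hc : c ≠ 0) (h : ∀ q : ℕ, q.Prime → (q:ℤ) ∣ c → (q:ℤ) ∣ d → ¬ (q:ℤ) ∣ N) :
    ∃ s : ℤ, IsCoprime (d + s * N) c := by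
  have hg : ((Int.gcd c N : ℕ) : ℤ) ∣ c := Int.gcd_dvd_left ..
  have hgd : Int.gcd c N ∣ c.natAbs := Int.natCast_dvd.mp hg
  have hcop : IsCoprime d (Int.gcd c N : ℤ) := by
    rw [Int.isCoprime_iff_gcd_eq_one]
    by_contra hne
    obtain ⟨q, hq, hqd⟩ := Nat.exists_prime_and_dvd hne
    have hqd := Int.natCast_dvd_natCast.mpr hqd
    have h1 : (q : ℤ) ∣ d := hqd.trans (Int.gcd_dvd_left ..)
    have h2 : (q : ℤ) ∣ (Int.gcd c N : ℤ) := hqd.trans (Int.gcd_dvd_right ..)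
    exact h q hq (h2.trans hg) h1 (h2.trans (Int.gcd_dvd_right ..))
  have : NeZero c.natAbs := ⟨Int.natAbs_ne_zero.mpr hc⟩
  have hu : IsUnit (d : ZMod (Int.gcd c N)) := (ZMod.coe_int_isUnit_iff_isCoprime _ _).mpr hcop.symm
  obtain ⟨v, hv⟩ := ZMod.unitsMap_surjective hgd hu.unit
  obtain ⟨d', hd'⟩ := ZMod.intCast_surjective (v : ZMod c.natAbs)
  have hv2 := congrArg Units.val hv
  rw [ZMod.unitsMap_val, ← hd'] at hv2
  simp only [IsUnit.unit_spec] at hv2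
  have hv3 : (d' : ZMod (Int.gcd c N)) = d := by
    rw [← hv2, ZMod.cast_intCast hgd]
  rw [eq_comm, ZMod.intCast_eq_intCast_iff_dvd_sub] at hv3
  obtain ⟨t, ht⟩ := hv3
  have hcop' : IsCoprime d' c := by
    have : IsUnit ((d' : ℤ) : ZMod c.natAbs) := hd' ▸ v.isUnit
    have := (ZMod.coe_int_isUnit_iff_isCoprime _ _).mp this
    rw [Int.natCast_natAbs] at this
    exact (IsCoprime.abs_left_iff _ _ |>.mp this).symm
  have hb := Int.gcd_eq_gcd_ab c N
  refine ⟨Int.gcdB c N * t, ?_⟩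
  have e : d + Int.gcdB c N * t * N = d' + c * (- (Int.gcdA c N * t)) := by
    have : d' = d + (Int.gcd c N : ℤ) * t := by linarith
    rw [this, hb]; ring
  rw [e]
  exact (IsCoprime.add_mul_left_left_iff).mpr hcop'

lemma lift_sl2 (N : ℤ) (hN : N ≠ 0) (a b c d : ℤ) (h : N ∣ a * d - b * c - 1) :
    ∃ a' b' c' d' : ℤ, a' * d' - b' * c' = 1 ∧ N ∣ a' - a ∧ N ∣ b' - b ∧ N ∣ c' - c ∧
      N ∣ d' - d := by
  obtain ⟨c', hc0, hc⟩ : ∃ c' : ℤ, c' ≠ 0 ∧ N ∣ c' - c := by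
    by_cases hc : c = 0
    · exact ⟨N, hN, by simp [hc]⟩
    · exact ⟨c, hc, by simp⟩
  have h' : N ∣ a * d - b * c' - 1 := by
    have : a * d - b * c' - 1 = (a * d - b * c - 1) - b * (c' - c) := by ring
    rw [this]; exact dvd_sub h (hc.mul_left _)
  obtain ⟨s, hs⟩ := exists_coprime_lift c' d N hc0 (by
    intro q hq h1 h2 h3
    have h4 := h3.trans h'
    have h5 : (q : ℤ) ∣ a * d - b * c' := dvd_sub (h2.mul_left _) (h1.mul_left _)
    have h6 := dvd_sub h5 h4
    have h7 : (q : ℤ) ∣ 1 := by simpa using h6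
    have := Int.natCast_dvd_natCast.mp (by simpa using h7 : (q : ℤ) ∣ (1 : ℕ))
    exact hq.one_lt.ne' (Nat.dvd_one.mp this))
  obtain ⟨x, y, hxy⟩ := hs
  obtain ⟨k, hk⟩ : N ∣ a * (d + s * N) - b * c' - 1 := by
    have : a * (d + s * N) - b * c' - 1 = (a * d - b * c' - 1) + N * (a * s) := by ring
    rw [this]; exact dvd_add h' (Dvd.intro _ rfl)
  refine ⟨a - k * N * x, b + k * N * y, c', d + s * N, ?_, ?_, ?_, hc, ?_⟩
  · linear_combination hk - k * N * hxy
  · exact ⟨-(k * x), by ring⟩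
  · exact ⟨k * y, by ring⟩
  · exact ⟨s, by ring⟩

end WB

namespace WB

/-- Representative vector of a point of the projective line. -/
def vecA {p : ℕ} : Option (ZMod p) → ZMod p
  | none => 1
  | some a => a

/-- Second coordinate of the representative vector. -/
def vecB {p : ℕ} : Option (ZMod p) → ZMod p
  | none => 0
  | some _ => 1

/-- Point of the projective line attached to a vector. -/
def pt {p : ℕ} (a b : ZMod p) : Option (ZMod p) := if b = 0 then none else some (a * b⁻¹)

/-- Local summand attached to a row vector. -/
noncomputable def hh {p : ℕ} (χ ψ : ZMod p →* ℂ) (e c a b : ZMod p) : ℂ :=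
  χ (a * e + b * c) * ψ (b * e) * (starRingEnd ℂ) (χ a * ψ b)

lemma mul_conj_one {p : ℕ} (hp : p.Prime) (f : ZMod p →* ℂ) {x : ZMod p} (hx : x ≠ 0) :
    f x * (starRingEnd ℂ) (f x) = 1 := by
  rw [Complex.mul_conj, Complex.normSq_eq_norm_sq, hom_norm hp f hx]; simp

lemma hh_smul {p : ℕ} (hp : p.Prime) (χ ψ : ZMod p →* ℂ) (e c a b t : ZMod p) (ht : t ≠ 0) :
    hh χ ψ e c (t * a) (t * b) = hh χ ψ e c a b := by
  unfold hh
  have h1 : t * a * e + t * b * c = t * (a * e + b * c) := by ring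
  have h2 : t * b * e = t * (b * e) := by ring
  rw [h1, h2]
  simp only [map_mul]
  have h3 := mul_conj_one hp χ ht
  have h4 := mul_conj_one hp ψ ht
  linear_combination (χ (a * e + b * c) * ψ b * ψ e * (starRingEnd ℂ) (χ a) * (starRingEnd ℂ) (ψ b)) *
    (χ t * (starRingEnd ℂ) (χ t) * h4 + h3)

lemma hh_pt {p : ℕ} (hp : p.Prime) (χ ψ : ZMod p →* ℂ) (e c a b : ZMod p)
    (h : a ≠ 0 ∨ b ≠ 0) :
    hh χ ψ e c a b = hh χ ψ e c (vecA (pt a b)) (vecB (pt a b)) := by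
  have := Fact.mk hp
  unfold pt
  split_ifs with hb
  · have ha : a ≠ 0 := by tauto
    have := hh_smul hp χ ψ e c 1 0 a ha
    simpa [vecA, vecB, hb] using this
  · have := hh_smul hp χ ψ e c (a * b⁻¹) 1 b hb
    rw [mul_comm b, mul_assoc, inv_mul_cancel₀ hb] at this
    simpa [vecA, vecB] using this

lemma pt_smul {p : ℕ} (hp : p.Prime) (a b t : ZMod p) (ht : t ≠ 0) :
    pt (t * a) (t * b) = pt a b := by
  have := Fact.mk hp
  unfold pt
  by_cases hb : b = 0
  · simp [hb]
  · simp only [mul_eq_zero, ht, hb, or_self, if_false, Option.some.injEq]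
    field_simp

lemma pt_vec {p : ℕ} (hp : p.Prime) (x : Option (ZMod p)) : pt (vecA x) (vecB x) = x := by
  have := Fact.mk hp
  cases x <;> simp [pt, vecA, vecB]

lemma pt_eq {p : ℕ} (hp : p.Prime) {a b a' b' : ZMod p} (h : pt a b = pt a' b') :
    a * b' = b * a' := by
  have := Fact.mk hp
  unfold pt at h
  split_ifs at h with h1 h2 h2
  · simp [h1, h2]
  · simp only [Option.some.injEq] at h
    field_simp at h
    linear_combination h

lemma pt_ne {p : ℕ} (hp : p.Prime) {a b a' b' : ZMod p} (h : a * b' - b * a' ≠ 0) :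
    pt a b ≠ pt a' b' := fun h' => h (by rw [pt_eq hp h']; ring)

lemma vec_det {p : ℕ} {x y : Option (ZMod p)} (hp : p.Prime) (h : x ≠ y) :
    vecA x * vecB y - vecB x * vecA y ≠ 0 := by
  have := Fact.mk hp
  cases x <;> cases y
  · simp at h
  · simp [vecA, vecB]
  · simp [vecA, vecB]
  · simp only [ne_eq, Option.some.injEq] at h
    simpa [vecA, vecB, sub_eq_zero] using h

lemma norm_hh_le {p : ℕ} (hp : p.Prime) (χ ψ : ZMod p →* ℂ) (e c a b : ZMod p) :
    ‖hh χ ψ e c a b‖ ≤ 1 := by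
  unfold hh
  simp only [norm_mul, RCLike.norm_conj]
  have h1 := hom_norm_le hp χ (a * e + b * c)
  have h2 := hom_norm_le hp ψ (b * e)
  have h3 := hom_norm_le hp χ a
  have h4 := hom_norm_le hp ψ b
  exact mul_le_one₀ (mul_le_one₀ h1 (norm_nonneg _) h2) (by positivity)
    (mul_le_one₀ h3 (norm_nonneg _) h4)

lemma sum_hom {p : ℕ} (hp : p.Prime) [Fintype (ZMod p)] (χ : ZMod p →* ℂ) (u : ZMod p)
    (hu : u ≠ 0) (h : χ u ≠ 1) : ∑ x, χ x = 0 := by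
  have := Fact.mk hp
  have h1 : ∑ x, χ (u * x) = ∑ x, χ x :=
    Fintype.sum_equiv (Equiv.mulLeft₀ u hu) _ _ (fun x => rfl)
  simp only [map_mul, ← Finset.mul_sum] at h1
  have h2 : (χ u - 1) * ∑ x, χ x = 0 := by linear_combination h1
  rcases mul_eq_zero.mp h2 with h3 | h3
  · exact absurd (sub_eq_zero.mp h3) h
  · exact h3

lemma sum_hh {p : ℕ} (hp : p.Prime) [Fintype (ZMod p)] (χ ψ : ZMod p →* ℂ) (e c : ZMod p)
    (hc : c ≠ 0) (u : ZMod p) (hu : u ≠ 0) (h : χ u ≠ 1) :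
    ‖∑ x : Option (ZMod p), hh χ ψ e c (vecA x) (vecB x)‖ ≤ 2 := by
  have := Fact.mk hp
  have hχ0 : χ 0 = 0 := by
    have h1 : χ 0 * χ u = χ 0 := by rw [← map_mul, zero_mul]
    have h2 : χ 0 * (χ u - 1) = 0 := by linear_combination h1
    rcases mul_eq_zero.mp h2 with h3 | h3
    · exact h3
    · exact absurd (sub_eq_zero.mp h3) h
  rw [Fintype.sum_option]
  refine (norm_add_le _ _).trans ?_
  have h1 := norm_hh_le hp χ ψ e c (vecA none) (vecB none)
  suffices ‖∑ x : ZMod p, hh χ ψ e c (vecA (some x)) (vecB (some x))‖ ≤ 1 by linarith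
  have h2 : ∀ x : ZMod p, hh χ ψ e c (vecA (some x)) (vecB (some x)) =
      ψ e * (if x = 0 then 0 else χ (e + c * x⁻¹)) := by
    intro x
    simp only [hh, vecA, vecB, one_mul, map_one, mul_one]
    split_ifs with hx
    · simp [hx, hχ0]
    · have : x * e + c = x * (e + c * x⁻¹) := by field_simp
      rw [this, map_mul]
      linear_combination (χ (e + c * x⁻¹) * ψ e) * mul_conj_one hp χ hx
  simp only [h2, ← Finset.mul_sum]
  rw [norm_mul]
  refine mul_le_one₀ (hom_norm_le hp ψ e) (norm_nonneg _) ?_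
  have h3 : ∑ x : ZMod p, (if x = 0 then 0 else χ (e + c * x⁻¹)) =
      ∑ x : ZMod p, (χ (e + c * x) - if x = 0 then χ e else 0) := by
    refine Fintype.sum_equiv (Equiv.inv (ZMod p)) _ _ (fun x => ?_)
    by_cases hx : x = 0
    · simp [hx]
    · simp [hx]
  have h4 : ∑ x : ZMod p, χ (e + c * x) = ∑ x, χ x :=
    Fintype.sum_equiv ((Equiv.mulLeft₀ c hc).trans (Equiv.addLeft e)) _ _ (fun x => rfl)
  rw [h3, Finset.sum_sub_distrib, h4, sum_hom hp χ u hu h]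
  simpa using hom_norm_le hp χ e

/-- The set of local data at `p`. -/
noncomputable def tset (p : ℕ) [Fintype (ZMod p)] (A₁ A₂ : Prop) :
    Finset (Option (ZMod p) × Option (ZMod p)) :=
  open Classical in
  Finset.univ.filter (fun z => (¬ A₁ → z.1 = none) ∧ (¬ A₂ → z.2 = none) ∧
    (A₁ → A₂ → z.1 ≠ z.2))

lemma norm_sum_le_card {X : Type*} [Fintype X] (f : X → ℂ) (h : ∀ x, ‖f x‖ ≤ 1) :
    ‖∑ x, f x‖ ≤ Fintype.card X := by
  refine (norm_sum_le _ _).trans ?_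
  refine (Finset.sum_le_sum (fun x _ => h x)).trans ?_
  simp

open Classical in
lemma local_bound {p : ℕ} (hp : p.Prime) [Fintype (ZMod p)] (A₁ A₂ : Prop) (hA : A₁ ∨ A₂)
    (f g : Option (ZMod p) → ℂ) (hf : ∀ x, ‖f x‖ ≤ 1) (hg : ∀ x, ‖g x‖ ≤ 1)
    (hf1 : ¬ A₁ → ∀ x, f x = 1) (hg1 : ¬ A₂ → ∀ x, g x = 1)
    (L₁ L₂ G : ℝ) (hL₁ : L₁ = 1 ∨ L₁ = p) (hL₂ : L₂ = 1 ∨ L₂ = p)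
    (hL₁' : ¬ A₁ → L₁ = 1) (hL₂' : ¬ A₂ → L₂ = 1)
    (hG : 1 ≤ G) (z : Prop) (hz : z → G = p)
    (hs₁ : ¬ z → L₁ = p → ‖∑ x, f x‖ ≤ 2) (hs₂ : ¬ z → L₂ = p → ‖∑ x, g x‖ ≤ 2) :
    ‖∑ x ∈ tset p A₁ A₂, f x.1 * g x.2‖ ≤
      6 * ((if A₁ then (p : ℝ) else 1) * (if A₂ then (p : ℝ) else 1)) * G * (max L₁ L₂)⁻¹ := by
  have := Fact.mk hp
  have hp2 : (2 : ℝ) ≤ p := by exact_mod_cast hp.two_le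
  have hcard : (Fintype.card (Option (ZMod p)) : ℝ) = p + 1 := by
    rw [Fintype.card_option, ZMod.card]; push_cast; ring
  have hf' := norm_sum_le_card f hf
  have hg' := norm_sum_le_card g hg
  rw [hcard] at hf' hg'
  have key : ∀ D S : ℝ, 0 ≤ D → S ≤ 6 * D * p →
      (¬ z → (L₁ = p ∨ L₂ = p) → S ≤ 6 * D) → S ≤ 6 * (D * p) * G * (max L₁ L₂)⁻¹ := by
    intro D S hD h1 h2
    have hM : max L₁ L₂ = 1 ∨ (max L₁ L₂ = p ∧ (L₁ = p ∨ L₂ = p)) := by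
      rcases hL₁ with h | h <;> rcases hL₂ with h' | h'
      · left; simp [h, h']
      · right; exact ⟨by rw [h, h']; exact max_eq_right (by linarith), Or.inr h'⟩
      · right; exact ⟨by rw [h, h']; exact max_eq_left (by linarith), Or.inl h⟩
      · right; exact ⟨by rw [h, h']; exact max_self _, Or.inl h⟩
    have hDp : 0 ≤ 6 * (D * p) := by positivity
    rcases hM with h | ⟨h, h'⟩
    · rw [h, inv_one, mul_one]
      nlinarith
    · rw [h]
      have e : 6 * (D * p) * G * (p : ℝ)⁻¹ = 6 * D * G := by field_simp
      rw [e]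
      by_cases hz' : z
      · rw [hz hz']; exact h1
      · have := h2 hz' h'
        nlinarith
  by_cases h1 : A₁ <;> by_cases h2 : A₂
  · have hS : ∑ x ∈ tset p A₁ A₂, f x.1 * g x.2 =
        (∑ x, f x) * (∑ x, g x) - ∑ x, f x * g x := by
      have e1 : (∑ x, f x) * (∑ x, g x) = ∑ x : Option (ZMod p) × Option (ZMod p), f x.1 * g x.2 := by
        rw [Finset.sum_mul_sum, Fintype.sum_prod_type]
      have e2 : ∑ x, f x * g x =
          ∑ x : Option (ZMod p) × Option (ZMod p), if x.1 = x.2 then f x.1 * g x.2 else 0 := by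
        rw [Fintype.sum_prod_type]
        simp
      rw [e1, e2, ← Finset.sum_sub_distrib]
      simp only [tset, h1, h2, Finset.sum_filter, not_true_eq_false, false_imp_iff, true_and,
        forall_true_left]
      refine Finset.sum_congr rfl fun x _ => ?_
      by_cases hx : x.1 = x.2 <;> simp [hx]
    have hd : ‖∑ x, f x * g x‖ ≤ p + 1 := by
      rw [← hcard]
      exact norm_sum_le_card _ fun x => by
        rw [norm_mul]; exact mul_le_one₀ (hf x) (norm_nonneg _) (hg x)
    have hS' : ‖∑ x ∈ tset p A₁ A₂, f x.1 * g x.2‖ ≤ ‖∑ x, f x‖ * ‖∑ x, g x‖ + (p + 1) := by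
      rw [hS]
      refine (norm_sub_le _ _).trans ?_
      rw [norm_mul]; linarith
    have n1 := norm_nonneg (∑ x, f x)
    have n2 := norm_nonneg (∑ x, g x)
    rw [if_pos h1, if_pos h2]
    refine key p _ (by positivity) ?_ ?_
    · have := mul_le_mul hf' hg' n2 (by positivity)
      nlinarith
    · intro hz' h
      rcases h with h | h
      · have := mul_le_mul (hs₁ hz' h) hg' n2 (by positivity)
        nlinarith
      · have := mul_le_mul hf' (hs₂ hz' h) n2 (by positivity)
        nlinarith
  · have hS : ∑ x ∈ tset p A₁ A₂, f x.1 * g x.2 = ∑ x, f x := by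
      simp only [tset, h1, h2, Finset.sum_filter, not_true_eq_false, false_imp_iff, true_and,
        forall_true_left, not_false_eq_true, imp_true_iff, and_true, hg1 h2, mul_one]
      rw [Fintype.sum_prod_type]
      simp
    rw [hS]
    simp only [h1, h2, if_true, if_false, mul_one]
    have := key 1 ‖∑ x, f x‖ (by positivity) (by linarith) (by
      intro hz' h
      rcases h with h | h
      · linarith [hs₁ hz' h]
      · rw [hL₂' h2] at h; linarith)
    simpa using this
  · have hS : ∑ x ∈ tset p A₁ A₂, f x.1 * g x.2 = ∑ x, g x := by
      simp only [tset, h1, h2, Finset.sum_filter, not_true_eq_false, false_imp_iff, true_and,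
        forall_true_left, not_false_eq_true, and_true, hf1 h1, one_mul]
      rw [Fintype.sum_prod_type_right]
      simp
    rw [hS]
    simp only [h1, h2, if_true, if_false, one_mul]
    have := key 1 ‖∑ x, g x‖ (by positivity) (by linarith) (by
      intro hz' h
      rcases h with h | h
      · rw [hL₁' h1] at h; linarith
      · linarith [hs₂ hz' h])
    simpa using this
  · tauto

end WB

namespace WB

open Classical in
/-- Local data attached to an integral matrix. -/
noncomputable def zz (Q₁ Q₂ p : ℕ) (τ : Matrix (Fin 2) (Fin 2) ℤ) :
    Option (ZMod p) × Option (ZMod p) :=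
  (if p ∣ Q₁ then pt (τ 0 0 : ZMod p) (τ 0 1 : ZMod p) else none,
   if p ∣ Q₂ then pt (τ 1 0 : ZMod p) (τ 1 1 : ZMod p) else none)

lemma zz_gamma {Q₁ Q₂ p : ℕ} (hp : p.Prime) {γ τ : Matrix (Fin 2) (Fin 2) ℤ}
    (hγ : InGamma2 Q₁ Q₂ γ) : zz Q₁ Q₂ p (γ * τ) = zz Q₁ Q₂ p τ := by
  have := Fact.mk hp
  obtain ⟨hd, h1, h2⟩ := hγ
  rw [Matrix.det_fin_two] at hd
  have hd' := congrArg (Int.cast : ℤ → ZMod p) hd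
  push_cast at hd'
  unfold zz
  simp only [Matrix.mul_apply, Fin.sum_univ_two]
  ext1
  · simp only
    split_ifs with h
    · have h0 : ((γ 0 1 : ℤ) : ZMod p) = 0 :=
        (ZMod.intCast_zmod_eq_zero_iff_dvd _ _).mpr ((Int.natCast_dvd_natCast.mpr h).trans h1)
      rw [h0] at hd'
      have hne : ((γ 0 0 : ℤ) : ZMod p) ≠ 0 := by
        intro h; rw [h] at hd'; simp at hd'
      push_cast
      rw [h0]
      simpa using pt_smul hp _ _ _ hne
    · rfl
  · simp only
    split_ifs with h
    · have h0 : ((γ 1 0 : ℤ) : ZMod p) = 0 :=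
        (ZMod.intCast_zmod_eq_zero_iff_dvd _ _).mpr ((Int.natCast_dvd_natCast.mpr h).trans h2)
      rw [h0] at hd'
      have hne : ((γ 1 1 : ℤ) : ZMod p) ≠ 0 := by
        intro h; rw [h] at hd'; simp at hd'
      push_cast
      rw [h0]
      simpa using pt_smul hp _ _ _ hne
    · rfl

lemma local_lift {Q₁ Q₂ p : ℕ} (hp : p.Prime) [Fintype (ZMod p)]
    (z : Option (ZMod p) × Option (ZMod p)) (hz : z ∈ tset p (p ∣ Q₁) (p ∣ Q₂)) :
    ∃ a b c d : ZMod p, a * d - b * c = 1 ∧ (p ∣ Q₁ → pt a b = z.1) ∧ (p ∣ Q₂ → pt c d = z.2) := by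
  have := Fact.mk hp
  obtain ⟨x, y⟩ := z
  simp only [tset, Finset.mem_filter, Finset.mem_univ, true_and] at hz
  obtain ⟨x', y', hxy, hx, hy⟩ : ∃ x' y' : Option (ZMod p), x' ≠ y' ∧ (p ∣ Q₁ → x' = x) ∧
      (p ∣ Q₂ → y' = y) := by
    by_cases h1 : p ∣ Q₁
    · by_cases h2 : p ∣ Q₂
      · exact ⟨x, y, hz.2.2 h1 h2, fun _ => rfl, fun _ => rfl⟩
      · obtain ⟨y', hy'⟩ := exists_ne x
        exact ⟨x, y', hy'.symm, fun _ => rfl, fun h => absurd h h2⟩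
    · obtain ⟨x', hx'⟩ := exists_ne y
      exact ⟨x', y, hx', fun h => absurd h h1, fun _ => rfl⟩
  have hD := vec_det hp hxy
  set D := vecA x' * vecB y' - vecB x' * vecA y' with hDdef
  refine ⟨vecA x', vecB x', D⁻¹ * vecA y', D⁻¹ * vecB y', ?_, ?_, ?_⟩
  · have : vecA x' * (D⁻¹ * vecB y') - vecB x' * (D⁻¹ * vecA y') = D⁻¹ * D := by
      rw [hDdef]; ring
    rw [this, inv_mul_cancel₀ hD]
  · intro h; simp only [pt_vec hp, hx h]
  · intro h; rw [pt_smul hp _ _ _ (inv_ne_zero hD)]; simp only [pt_vec hp, hy h]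

lemma global_sum {Q₁ Q₂ : ℕ} (h₁ : Squarefree Q₁) (h₂ : Squarefree Q₂)
    (T : Finset (Matrix (Fin 2) (Fin 2) ℤ))
    (hT : ∀ τ ∈ T, τ.det = 1)
    (hT' : ∀ g : Matrix (Fin 2) (Fin 2) ℤ, g.det = 1 →
          ∃! τ, τ ∈ T ∧ ∃ γ, InGamma2 Q₁ Q₂ γ ∧ g = γ * τ)
    [∀ p : {x // x ∈ (Q₁ * Q₂).primeFactors}, Fintype (ZMod (p : ℕ))]
    (F : (p : ℕ) → Option (ZMod p) × Option (ZMod p) → ℂ) :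
    ∑ τ ∈ T, ∏ p : {x // x ∈ (Q₁ * Q₂).primeFactors}, F p (zz Q₁ Q₂ p τ) =
      ∏ p : {x // x ∈ (Q₁ * Q₂).primeFactors}, ∑ z ∈ tset p ((p : ℕ) ∣ Q₁) ((p : ℕ) ∣ Q₂), F p z := by
  classical
  have hne : Q₁ * Q₂ ≠ 0 := mul_ne_zero h₁.ne_zero h₂.ne_zero
  have hPp : ∀ p ∈ (Q₁ * Q₂).primeFactors, p.Prime := fun p hp => Nat.prime_of_mem_primeFactors hp
  rw [Finset.prod_univ_sum]
  refine Finset.sum_bij (fun τ _ => fun p => zz Q₁ Q₂ p τ) ?_ ?_ ?_ ?_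
  · intro τ hτ
    rw [Fintype.mem_piFinset]
    intro p
    have hp := hPp p p.2
    have := Fact.mk hp
    simp only [tset, Finset.mem_filter, Finset.mem_univ, true_and, zz]
    refine ⟨fun h => by simp [h], fun h => by simp [h], fun ha hb => ?_⟩
    simp only [ha, hb, if_true]
    apply pt_ne hp
    have hd := hT τ hτ
    rw [Matrix.det_fin_two] at hd
    have hd' := congrArg (Int.cast : ℤ → ZMod (p : ℕ)) hd
    push_cast at hd'
    rw [hd']; exact one_ne_zero
  · intro τ hτ τ' hτ' heq
    have hd := hT τ hτ
    have hd' := hT τ' hτ'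
    have hz : ∀ p ∈ (Q₁ * Q₂).primeFactors, zz Q₁ Q₂ p τ = zz Q₁ Q₂ p τ' :=
      fun p hp => congrFun heq ⟨p, hp⟩
    have hg : InGamma2 Q₁ Q₂ (τ' * τ.adjugate) := by
      refine ⟨by rw [Matrix.det_mul, Matrix.det_adjugate, hd, hd']; simp, ?_, ?_⟩
      · apply sqf_dvd h₁
        intro q hq hqQ
        have h := congrArg Prod.fst (hz q (Nat.mem_primeFactors.mpr ⟨hq, hqQ.mul_right _, hne⟩))
        simp only [zz, hqQ, if_true] at h
        have h' := pt_eq hq h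
        rw [← ZMod.intCast_zmod_eq_zero_iff_dvd]
        simp only [Matrix.mul_apply, Fin.sum_univ_two, Matrix.adjugate_fin_two]
        simp
        linear_combination h'
      · apply sqf_dvd h₂
        intro q hq hqQ
        have h := congrArg Prod.snd (hz q (Nat.mem_primeFactors.mpr ⟨hq, hqQ.mul_left _, hne⟩))
        simp only [zz, hqQ, if_true] at h
        have h' := pt_eq hq h
        rw [← ZMod.intCast_zmod_eq_zero_iff_dvd]
        simp only [Matrix.mul_apply, Fin.sum_univ_two, Matrix.adjugate_fin_two]
        simp
        linear_combination -h'
    refine (hT' τ' hd').unique ⟨hτ, _, hg, ?_⟩ ⟨hτ', 1, ?_, by simp⟩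
    · rw [Matrix.mul_assoc, Matrix.adjugate_mul, hd]; simp
    · exact ⟨by simp, by simp, by simp⟩
  · intro f hf
    rw [Fintype.mem_piFinset] at hf
    have H : ∀ p : ℕ, ∃ a b c d : ℤ, ∀ hp : p ∈ (Q₁ * Q₂).primeFactors,
        ((a : ZMod p) * d - b * c = 1 ∧ (p ∣ Q₁ → pt (a : ZMod p) b = (f ⟨p, hp⟩).1) ∧
          (p ∣ Q₂ → pt (c : ZMod p) d = (f ⟨p, hp⟩).2)) := by
      intro p
      by_cases hp : p ∈ (Q₁ * Q₂).primeFactors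
      · letI : Fintype (ZMod p) := ‹∀ p : {x // x ∈ (Q₁ * Q₂).primeFactors}, Fintype (ZMod (p : ℕ))› ⟨p, hp⟩
        obtain ⟨a, b, c, d, h⟩ := local_lift (hPp p hp) (f ⟨p, hp⟩) (hf ⟨p, hp⟩)
        obtain ⟨a, rfl⟩ := ZMod.intCast_surjective a
        obtain ⟨b, rfl⟩ := ZMod.intCast_surjective b
        obtain ⟨c, rfl⟩ := ZMod.intCast_surjective c
        obtain ⟨d, rfl⟩ := ZMod.intCast_surjective d
        exact ⟨a, b, c, d, fun _ => h⟩
      · exact ⟨0, 0, 0, 0, fun h => absurd h hp⟩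
    choose a b c d H using H
    obtain ⟨a₀, ha₀⟩ := crt _ hPp a
    obtain ⟨b₀, hb₀⟩ := crt _ hPp b
    obtain ⟨c₀, hc₀⟩ := crt _ hPp c
    obtain ⟨d₀, hd₀⟩ := crt _ hPp d
    have cast_eq : ∀ {p : ℕ} {x y : ℤ}, (p : ℤ) ∣ x - y → (x : ZMod p) = y := by
      intro p x y h
      exact ((ZMod.intCast_eq_intCast_iff_dvd_sub _ _ _).mpr h).symm
    have hN : (∏ p ∈ (Q₁ * Q₂).primeFactors, p : ℕ) ≠ 0 :=
      Finset.prod_ne_zero_iff.mpr fun p hp => (hPp p hp).ne_zero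
    obtain ⟨a', b', c', d', hdet, ha', hb', hc', hd'⟩ :=
      lift_sl2 ((∏ p ∈ (Q₁ * Q₂).primeFactors, p : ℕ) : ℤ) (by exact_mod_cast hN) a₀ b₀ c₀ d₀ (by
        rw [Nat.cast_prod]
        apply Finset.prod_dvd_of_coprime
        · intro p hp q hq hpq
          exact Nat.isCoprime_iff_coprime.mpr ((Nat.coprime_primes (hPp p hp) (hPp q hq)).mpr hpq)
        · intro p hp
          rw [← ZMod.intCast_zmod_eq_zero_iff_dvd]
          push_cast
          rw [cast_eq (ha₀ p hp), cast_eq (hb₀ p hp), cast_eq (hc₀ p hp), cast_eq (hd₀ p hp),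
            (H p hp).1, sub_self])
    obtain ⟨τ, ⟨hτ, γ, hγ, hg⟩, -⟩ := hT' !![a', b'; c', d'] (by
      rw [Matrix.det_fin_two_of]; exact hdet)
    refine ⟨τ, hτ, ?_⟩
    funext p
    have hp := hPp p p.2
    have hdv : ∀ {x y : ℤ}, ((∏ p ∈ (Q₁ * Q₂).primeFactors, p : ℕ) : ℤ) ∣ x - y →
        (x : ZMod (p : ℕ)) = y := by
      intro x y h
      exact cast_eq ((Int.natCast_dvd_natCast.mpr (Finset.dvd_prod_of_mem _ p.2)).trans h)
    rw [← zz_gamma hp hγ, ← hg]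
    have hfp := hf p
    simp only [tset, Finset.mem_filter, Finset.mem_univ, true_and] at hfp
    have Hp := H p p.2
    simp only [zz, Matrix.of_apply, Matrix.cons_val', Matrix.cons_val_zero, Matrix.cons_val_one,
      Matrix.cons_val_fin_one]
    rw [hdv ha', hdv hb', hdv hc', hdv hd', cast_eq (ha₀ p p.2), cast_eq (hb₀ p p.2),
      cast_eq (hc₀ p p.2), cast_eq (hd₀ p p.2)]
    ext1
    · simp only
      split_ifs with h
      · exact Hp.2.1 h
      · exact (hfp.1 h).symm
    · simp only
      split_ifs with h
      · exact Hp.2.2 h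
      · exact (hfp.2.1 h).symm
  · intro τ hτ
    rfl

end WB

namespace WB

/-- The weight `α`. -/
noncomputable def al {m₁ n₁ m₂ n₂ : ℕ} (χ₁ : DirichletCharacter ℂ m₁)
    (ψ₁ : DirichletCharacter ℂ n₁) (χ₂ : DirichletCharacter ℂ m₂)
    (ψ₂ : DirichletCharacter ℂ n₂) (g : Matrix (Fin 2) (Fin 2) ℤ) : ℂ :=
  χ₁ ((g 0 0 : ZMod m₁)) * ψ₁ ((g 0 1 : ZMod n₁))
              * χ₂ ((g 1 0 : ZMod m₂)) * ψ₂ ((g 1 1 : ZMod n₂))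

lemma localCond_cases {m Q : ℕ} (hQ : Squarefree Q) (hm : m ∣ Q) (χ : DirichletCharacter ℂ m)
    {p : ℕ} (hp : p.Prime) :
    (localCond χ p = 1 ∨ (localCond χ p = p ∧ p ∣ χ.conductor)) ∧
      (¬ p ∣ Q → localCond χ p = 1) := by
  have hcQ : χ.conductor ∣ Q := χ.conductor_dvd_level.trans hm
  have hsq : Squarefree χ.conductor := hQ.squarefree_of_dvd hcQ
  have hle := (Nat.squarefree_iff_factorization_le_one hsq.ne_zero).mp hsq p
  constructor
  · by_cases h : p ∣ χ.conductor
    · right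
      have := (hp.dvd_iff_one_le_factorization hsq.ne_zero).mp h
      have h1 : χ.conductor.factorization p = 1 := le_antisymm hle this
      exact ⟨by simp [localCond, h1], h⟩
    · left
      simp [localCond, Nat.factorization_eq_zero_of_not_dvd h]
  · intro h
    have : ¬ p ∣ χ.conductor := fun h' => h (h'.trans hcQ)
    simp [localCond, Nat.factorization_eq_zero_of_not_dvd this]

lemma w_bound {Q₁ Q₂ : ℕ} (h₁ : Squarefree Q₁) (h₂ : Squarefree Q₂)
    {m₁ n₁ : ℕ} (hm₁ : m₁ ∣ Q₁) (hn₁ : n₁ ∣ Q₁) {m₂ n₂ : ℕ} (hm₂ : m₂ ∣ Q₂) (hn₂ : n₂ ∣ Q₂)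
    (χ₁ : DirichletCharacter ℂ m₁) (ψ₁ : DirichletCharacter ℂ n₁)
    (χ₂ : DirichletCharacter ℂ m₂) (ψ₂ : DirichletCharacter ℂ n₂)
    (T : Finset (Matrix (Fin 2) (Fin 2) ℤ))
    (hT : ∀ τ ∈ T, τ.det = 1)
    (hT' : ∀ g : Matrix (Fin 2) (Fin 2) ℤ, g.det = 1 →
          ∃! τ, τ ∈ T ∧ ∃ γ, InGamma2 Q₁ Q₂ γ ∧ g = γ * τ) (e c : ℤ) :
    ‖∑ τ ∈ T, al χ₁ ψ₁ χ₂ ψ₂ (τ * !![e, 0; c, e]) * (starRingEnd ℂ) (al χ₁ ψ₁ χ₂ ψ₂ τ)‖ ≤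
      ∏ p ∈ (Q₁ * Q₂).primeFactors,
        (6 * ((if p ∣ Q₁ then (p : ℝ) else 1) * (if p ∣ Q₂ then (p : ℝ) else 1)) *
          (Int.gcd c p : ℝ) * (max (localCond χ₁ p : ℝ) (localCond χ₂ p : ℝ))⁻¹) := by
  classical
  have hne : Q₁ * Q₂ ≠ 0 := mul_ne_zero h₁.ne_zero h₂.ne_zero
  have hPp : ∀ p ∈ (Q₁ * Q₂).primeFactors, p.Prime := fun p hp => Nat.prime_of_mem_primeFactors hp
  letI : ∀ p : {x // x ∈ (Q₁ * Q₂).primeFactors}, Fintype (ZMod (p : ℕ)) := fun p =>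
    have : NeZero (p : ℕ) := ⟨(hPp p p.2).ne_zero⟩
    ZMod.fintype _
  obtain ⟨X₁, hX₁, hX₁p, hX₁c⟩ := exists_local (h₁.squarefree_of_dvd hm₁) χ₁
  obtain ⟨Y₁, hY₁, hY₁p, hY₁c⟩ := exists_local (h₁.squarefree_of_dvd hn₁) ψ₁
  obtain ⟨X₂, hX₂, hX₂p, hX₂c⟩ := exists_local (h₂.squarefree_of_dvd hm₂) χ₂
  obtain ⟨Y₂, hY₂, hY₂p, hY₂c⟩ := exists_local (h₂.squarefree_of_dvd hn₂) ψ₂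
  have s1 : ∀ {k : ℕ}, k ∣ Q₁ → k.primeFactors ⊆ (Q₁ * Q₂).primeFactors := fun h =>
    Nat.primeFactors_mono (h.mul_right _) hne
  have s2 : ∀ {k : ℕ}, k ∣ Q₂ → k.primeFactors ⊆ (Q₁ * Q₂).primeFactors := fun h =>
    Nat.primeFactors_mono (h.mul_left _) hne
  have hX₁p := hX₁p _ hPp (s1 hm₁)
  have hY₁p := hY₁p _ hPp (s1 hn₁)
  have hX₂p := hX₂p _ hPp (s2 hm₂)
  have hY₂p := hY₂p _ hPp (s2 hn₂)
  have hal : ∀ g, al χ₁ ψ₁ χ₂ ψ₂ g = ∏ p ∈ (Q₁ * Q₂).primeFactors,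
      (X₁ p (g 0 0 : ZMod p) * Y₁ p (g 0 1 : ZMod p) * X₂ p (g 1 0 : ZMod p) *
        Y₂ p (g 1 1 : ZMod p)) := by
    intro g
    rw [al, hX₁p, hY₁p, hX₂p, hY₂p]
    simp only [Finset.prod_mul_distrib]
  have one₁ : ∀ p : ℕ, p.Prime → ¬ p ∣ Q₁ → ∀ a b : ZMod p, hh (X₁ p) (Y₁ p) e c a b = 1 := by
    intro p hp h a b
    simp [hh, hX₁ p hp (fun h' => h (h'.trans hm₁)), hY₁ p hp (fun h' => h (h'.trans hn₁))]
  have one₂ : ∀ p : ℕ, p.Prime → ¬ p ∣ Q₂ → ∀ a b : ZMod p, hh (X₂ p) (Y₂ p) e c a b = 1 := by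
    intro p hp h a b
    simp [hh, hX₂ p hp (fun h' => h (h'.trans hm₂)), hY₂ p hp (fun h' => h (h'.trans hn₂))]
  let f₁ : (p : ℕ) → Option (ZMod p) → ℂ := fun p x => hh (X₁ p) (Y₁ p) e c (vecA x) (vecB x)
  let f₂ : (p : ℕ) → Option (ZMod p) → ℂ := fun p x => hh (X₂ p) (Y₂ p) e c (vecA x) (vecB x)
  have hsum : ∑ τ ∈ T, al χ₁ ψ₁ χ₂ ψ₂ (τ * !![e, 0; c, e]) * (starRingEnd ℂ) (al χ₁ ψ₁ χ₂ ψ₂ τ) =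
      ∑ τ ∈ T, ∏ p : {x // x ∈ (Q₁ * Q₂).primeFactors},
        (fun (p : ℕ) (z : Option (ZMod p) × Option (ZMod p)) => f₁ p z.1 * f₂ p z.2) p
          (zz Q₁ Q₂ p τ) := by
    refine Finset.sum_congr rfl fun τ hτ => ?_
    have hd := hT τ hτ
    rw [Matrix.det_fin_two] at hd
    rw [Finset.prod_coe_sort (Q₁ * Q₂).primeFactors (fun p => f₁ p (zz Q₁ Q₂ p τ).1 * f₂ p (zz Q₁ Q₂ p τ).2),
      hal, hal, map_prod, ← Finset.prod_mul_distrib]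
    refine Finset.prod_congr rfl fun p hp => ?_
    have hp := hPp p hp
    have := Fact.mk hp
    have hd' := congrArg (Int.cast : ℤ → ZMod p) hd
    push_cast at hd'
    have e1 : f₁ p (zz Q₁ Q₂ p τ).1 = hh (X₁ p) (Y₁ p) e c (τ 0 0) (τ 0 1) := by
      simp only [zz, f₁]
      split_ifs with h
      · refine (hh_pt hp _ _ _ _ _ _ ?_).symm
        by_contra hcon
        push Not at hcon
        rw [hcon.1, hcon.2] at hd'
        simp at hd'
      · rw [one₁ p hp h, one₁ p hp h]
    have e2 : f₂ p (zz Q₁ Q₂ p τ).2 = hh (X₂ p) (Y₂ p) e c (τ 1 0) (τ 1 1) := by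
      simp only [zz, f₂]
      split_ifs with h
      · refine (hh_pt hp _ _ _ _ _ _ ?_).symm
        by_contra hcon
        push Not at hcon
        rw [hcon.1, hcon.2] at hd'
        simp at hd'
      · rw [one₂ p hp h, one₂ p hp h]
    rw [e1, e2]
    simp only [hh, Matrix.mul_apply, Fin.sum_univ_two, Matrix.of_apply, Matrix.cons_val',
      Matrix.cons_val_zero, Matrix.cons_val_one, Matrix.cons_val_fin_one, mul_zero, zero_add]
    push_cast
    simp only [map_mul]
    ring
  rw [hsum.trans (global_sum h₁ h₂ T hT hT'
      (fun (p : ℕ) (z : Option (ZMod p) × Option (ZMod p)) => f₁ p z.1 * f₂ p z.2)), norm_prod,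
    ← Finset.prod_coe_sort (Q₁ * Q₂).primeFactors]
  refine Finset.prod_le_prod (fun _ _ => norm_nonneg _) fun p _ => ?_
  have hp := hPp p p.2
  have hc₁ := localCond_cases h₁ hm₁ χ₁ hp
  have hc₂ := localCond_cases h₂ hm₂ χ₂ hp
  have hg0 : Int.gcd c (p : ℕ) ≠ 0 := by
    rw [Ne, Int.gcd_eq_zero_iff]; intro h; exact hp.ne_zero (by exact_mod_cast h.2)
  have cz : ¬ ((p : ℕ) : ℤ) ∣ c → (c : ZMod (p : ℕ)) ≠ 0 := fun h h' =>
    h ((ZMod.intCast_zmod_eq_zero_iff_dvd _ _).mp h')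
  have aux : ∀ {m : ℕ} (χ : DirichletCharacter ℂ m),
    (localCond χ p = 1 ∨ (localCond χ p = p ∧ (p : ℕ) ∣ χ.conductor)) →
    (localCond χ p : ℝ) = (p : ℕ) → (p : ℕ) ∣ χ.conductor := by
    intro m χ h h'
    have h'' : localCond χ p = p := by exact_mod_cast h'
    rcases h with h | h
    · exact absurd (h''.symm.trans h) hp.ne_one
    · exact h.2
  have := local_bound hp ((p : ℕ) ∣ Q₁) ((p : ℕ) ∣ Q₂)
    ((Nat.Prime.dvd_mul hp).mp (Nat.dvd_of_mem_primeFactors p.2)) (f₁ p) (f₂ p)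
    (fun x => norm_hh_le hp _ _ _ _ _ _) (fun x => norm_hh_le hp _ _ _ _ _ _)
    (fun h x => one₁ p hp h _ _) (fun h x => one₂ p hp h _ _)
    (localCond χ₁ p) (localCond χ₂ p) (Int.gcd c (p : ℕ))
    (by rcases hc₁.1 with h | h
        · left; exact_mod_cast h
        · right; exact_mod_cast h.1)
    (by rcases hc₂.1 with h | h
        · left; exact_mod_cast h
        · right; exact_mod_cast h.1)
    (fun h => by exact_mod_cast hc₁.2 h) (fun h => by exact_mod_cast hc₂.2 h)
    (by exact_mod_cast Nat.one_le_iff_ne_zero.mpr hg0)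
    (((p : ℕ) : ℤ) ∣ c) (fun h => by exact_mod_cast (Int.gcd_eq_right_iff_dvd (by positivity)).mpr h)
    (fun hz h => by
      obtain ⟨u, hu, hu'⟩ := hX₁c p hp (aux χ₁ hc₁.1 h)
      exact sum_hh hp _ _ _ _ (cz hz) u hu hu')
    (fun hz h => by
      obtain ⟨u, hu, hu'⟩ := hX₂c p hp (aux χ₂ hc₂.1 h)
      exact sum_hh hp _ _ _ _ (cz hz) u hu hu')
  refine this.trans (le_of_eq ?_)
  congr!

lemma prod_ite_eq {Q R : ℕ} (hQ : Squarefree Q) (hR : R ≠ 0) (h : Q ∣ R) :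
    ∏ p ∈ R.primeFactors, (if p ∣ Q then (p : ℝ) else 1) = Q := by
  rw [← Finset.prod_filter]
  have : R.primeFactors.filter (fun p => p ∣ Q) = Q.primeFactors := by
    ext p
    simp only [Finset.mem_filter, Nat.mem_primeFactors]
    exact ⟨fun ⟨a, b⟩ => ⟨a.1, b, hQ.ne_zero⟩, fun ⟨a, b, _⟩ => ⟨⟨a, b.trans h, hR⟩, b⟩⟩
  rw [this]
  conv_rhs => rw [← Nat.prod_primeFactors_of_squarefree hQ]
  push_cast; rfl

lemma w_bound' {Q₁ Q₂ : ℕ} (h₁ : Squarefree Q₁) (h₂ : Squarefree Q₂)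
    {m₁ n₁ : ℕ} (hm₁ : m₁ ∣ Q₁) (hn₁ : n₁ ∣ Q₁) {m₂ n₂ : ℕ} (hm₂ : m₂ ∣ Q₂) (hn₂ : n₂ ∣ Q₂)
    (χ₁ : DirichletCharacter ℂ m₁) (ψ₁ : DirichletCharacter ℂ n₁)
    (χ₂ : DirichletCharacter ℂ m₂) (ψ₂ : DirichletCharacter ℂ n₂)
    (T : Finset (Matrix (Fin 2) (Fin 2) ℤ))
    (hT : ∀ τ ∈ T, τ.det = 1)
    (hT' : ∀ g : Matrix (Fin 2) (Fin 2) ℤ, g.det = 1 →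
          ∃! τ, τ ∈ T ∧ ∃ γ, InGamma2 Q₁ Q₂ γ ∧ g = γ * τ) (e c : ℤ) :
    ‖∑ τ ∈ T, al χ₁ ψ₁ χ₂ ψ₂ (τ * !![e, 0; c, e]) * (starRingEnd ℂ) (al χ₁ ψ₁ χ₂ ψ₂ τ)‖ ≤
      (6 ^ (Q₁ * Q₂).primeFactors.card * ((Q₁ : ℝ) * Q₂) *
        ((∏ p ∈ Q₁.primeFactors \ (Nat.gcd Q₁ Q₂).primeFactors,
                    ((localCond χ₁ p : ℝ))⁻¹)
                * (∏ p ∈ Q₂.primeFactors \ (Nat.gcd Q₁ Q₂).primeFactors,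
                    ((localCond χ₂ p : ℝ))⁻¹)
                * (∏ p ∈ (Nat.gcd Q₁ Q₂).primeFactors,
                    ((max (localCond χ₁ p) (localCond χ₂ p) : ℝ))⁻¹))) *
      ∏ p ∈ (Q₁ * Q₂).primeFactors, (Int.gcd c p : ℝ) := by
  have hne : Q₁ * Q₂ ≠ 0 := mul_ne_zero h₁.ne_zero h₂.ne_zero
  refine (w_bound h₁ h₂ hm₁ hn₁ hm₂ hn₂ χ₁ ψ₁ χ₂ ψ₂ T hT hT' e c).trans (le_of_eq ?_)
  simp only [Finset.prod_mul_distrib, Finset.prod_const]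
  rw [prod_ite_eq h₁ hne (Dvd.intro _ rfl), prod_ite_eq h₂ hne (Dvd.intro_left _ rfl)]
  have key : ∏ p ∈ (Q₁ * Q₂).primeFactors, (max (localCond χ₁ p : ℝ) (localCond χ₂ p : ℝ))⁻¹ =
    (∏ p ∈ Q₁.primeFactors \ (Nat.gcd Q₁ Q₂).primeFactors,
                    ((localCond χ₁ p : ℝ))⁻¹)
                * (∏ p ∈ Q₂.primeFactors \ (Nat.gcd Q₁ Q₂).primeFactors,
                    ((localCond χ₂ p : ℝ))⁻¹)
                * (∏ p ∈ (Nat.gcd Q₁ Q₂).primeFactors,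
                    ((max (localCond χ₁ p) (localCond χ₂ p) : ℝ))⁻¹) := by
    have hge : ∀ {m Q : ℕ} (_ : Squarefree Q) (_ : m ∣ Q) (χ : DirichletCharacter ℂ m) (p : ℕ),
        p.Prime → (1 : ℝ) ≤ localCond χ p := by
      intro m Q hQ hm χ p hp
      have := (localCond_cases hQ hm χ hp).1
      have h1 := hp.one_lt
      have : 1 ≤ localCond χ p := by omega
      exact_mod_cast this
    have hg : (Nat.gcd Q₁ Q₂).primeFactors = Q₁.primeFactors ∩ Q₂.primeFactors :=
      Nat.primeFactors_gcd h₁.ne_zero h₂.ne_zero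
    have e1 : ∏ p ∈ Q₁.primeFactors \ (Nat.gcd Q₁ Q₂).primeFactors, ((localCond χ₁ p : ℝ))⁻¹ =
        ∏ p ∈ Q₁.primeFactors \ (Nat.gcd Q₁ Q₂).primeFactors,
          (max (localCond χ₁ p : ℝ) (localCond χ₂ p : ℝ))⁻¹ := by
      refine Finset.prod_congr rfl fun p hp => ?_
      rw [hg] at hp
      simp only [Finset.mem_sdiff, Finset.mem_inter, not_and] at hp
      have hpp := Nat.prime_of_mem_primeFactors hp.1
      have : ¬ p ∣ Q₂ := fun h => hp.2 hp.1 (Nat.mem_primeFactors.mpr ⟨hpp, h, h₂.ne_zero⟩)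
      rw [(localCond_cases h₂ hm₂ χ₂ hpp).2 this, Nat.cast_one, max_eq_left (hge h₁ hm₁ χ₁ p hpp)]
    have e2 : ∏ p ∈ Q₂.primeFactors \ (Nat.gcd Q₁ Q₂).primeFactors, ((localCond χ₂ p : ℝ))⁻¹ =
        ∏ p ∈ Q₂.primeFactors \ (Nat.gcd Q₁ Q₂).primeFactors,
          (max (localCond χ₁ p : ℝ) (localCond χ₂ p : ℝ))⁻¹ := by
      refine Finset.prod_congr rfl fun p hp => ?_
      rw [hg] at hp
      simp only [Finset.mem_sdiff, Finset.mem_inter, not_and] at hp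
      have hpp := Nat.prime_of_mem_primeFactors hp.1
      have : ¬ p ∣ Q₁ := fun h => hp.2 (Nat.mem_primeFactors.mpr ⟨hpp, h, h₁.ne_zero⟩) hp.1
      rw [(localCond_cases h₁ hm₁ χ₁ hpp).2 this, Nat.cast_one, max_eq_right (hge h₂ hm₂ χ₂ p hpp)]
    rw [e1, e2, hg, Nat.primeFactors_mul h₁.ne_zero h₂.ne_zero, mul_assoc]
    have e3 : Q₂.primeFactors \ (Q₁.primeFactors ∩ Q₂.primeFactors) =
      Q₂.primeFactors \ Q₁.primeFactors := by ext; simp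
    rw [e3, mul_comm (∏ p ∈ Q₂.primeFactors \ Q₁.primeFactors, _), ← mul_assoc,
      Finset.prod_sdiff Finset.inter_subset_left, ← Finset.union_sdiff_self_eq_union,
      Finset.prod_union Finset.disjoint_sdiff]
  rw [key]
  ring

end WB

namespace WB

lemma count_mult (n : ℤ) (d : ℕ) (hd : 0 < d) (hn : 0 ≤ n) :
    (((Finset.Icc (-n) n).filter (fun c : ℤ => c ≠ 0 ∧ (d : ℤ) ∣ c)).card : ℤ) ≤ 2 * (n / d) := by
  have hd' : (0 : ℤ) < d := by exact_mod_cast hd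
  have hq : 0 ≤ n / (d : ℤ) := Int.ediv_nonneg hn hd'.le
  have hsub : (Finset.Icc (-n) n).filter (fun c : ℤ => c ≠ 0 ∧ (d : ℤ) ∣ c) ⊆
      ((Finset.Icc (-(n / d)) (n / d)).erase (0 : ℤ)).image (fun k => (d : ℤ) * k) := by
    intro c hc
    simp only [Finset.mem_filter, Finset.mem_Icc] at hc
    obtain ⟨⟨h1, h2⟩, h3, k, rfl⟩ := hc
    refine Finset.mem_image.mpr ⟨k, ?_, rfl⟩
    simp only [Finset.mem_erase, Finset.mem_Icc]
    refine ⟨by rintro rfl; simp at h3, ?_, ?_⟩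
    · have : -k ≤ n / d := (Int.le_ediv_iff_mul_le hd').mpr (by linarith)
      linarith
    · exact (Int.le_ediv_iff_mul_le hd').mpr (by linarith)
  have h1 := (Finset.card_le_card hsub).trans Finset.card_image_le
  rw [Finset.card_erase_of_mem (by simp [hq]), Int.card_Icc] at h1
  omega

lemma sum_gcd_bound (P : Finset ℕ) (hP : ∀ p ∈ P, p.Prime) (C : ℝ) (hC : 1 ≤ C)
    (K : ℝ) (hK : 0 ≤ K) (W : ℤ → ℝ)
    (hW : ∀ c : ℤ, W c ≤ K * ∏ p ∈ P, (Int.gcd c p : ℝ)) :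
    (∑' c : ℤ, if c ≠ 0 ∧ |(c : ℝ)| ≤ C then W c else 0) ≤ K * (2 * C * 2 ^ P.card) := by
  classical
  have hfl : ∀ c : ℤ, |(c : ℝ)| ≤ C ↔ c ∈ Finset.Icc (-⌊C⌋) ⌊C⌋ := by
    intro c
    rw [Finset.mem_Icc, ← abs_le, Int.le_floor]
    push_cast; rfl
  have hn : 0 ≤ ⌊C⌋ := Int.floor_nonneg.mpr (by linarith)
  rw [tsum_eq_sum (s := Finset.Icc (-⌊C⌋) ⌊C⌋) (by
    intro c hc
    rw [if_neg]
    rintro ⟨-, h⟩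
    exact hc ((hfl c).mp h))]
  have hpt : ∀ c : ℤ, ∏ p ∈ P, (Int.gcd c p : ℝ) ≤
      ∑ S ∈ P.powerset, if ((∏ p ∈ S, p : ℕ) : ℤ) ∣ c then ((∏ p ∈ S, p : ℕ) : ℝ) else 0 := by
    intro c
    have e : ∏ p ∈ P, (Int.gcd c p : ℝ) = ((∏ p ∈ P.filter (fun p : ℕ => (p : ℤ) ∣ c), p : ℕ) : ℝ) := by
      rw [Nat.cast_prod, Finset.prod_filter]
      refine Finset.prod_congr rfl fun p hp => ?_
      split_ifs with h
      · exact_mod_cast (Int.gcd_eq_right_iff_dvd (by positivity)).mpr h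
      · have : Int.gcd c p = 1 := by
          rw [Int.gcd_comm, ← Int.isCoprime_iff_gcd_eq_one]
          exact (Prime.coprime_iff_not_dvd (Nat.prime_iff_prime_int.mp (hP p hp))).mpr h
        rw [this, Nat.cast_one]
    have hdv : ((∏ p ∈ P.filter (fun p : ℕ => (p : ℤ) ∣ c), p : ℕ) : ℤ) ∣ c := by
      rw [Nat.cast_prod]
      apply Finset.prod_dvd_of_coprime
      · intro p hp q hq hpq
        simp only [Finset.coe_filter, Set.mem_ofPred_eq] at hp hq
        exact Nat.isCoprime_iff_coprime.mpr
          ((Nat.coprime_primes (hP p hp.1) (hP q hq.1)).mpr hpq)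
      · intro p hp
        exact (Finset.mem_filter.mp hp).2
    rw [e]
    have := Finset.single_le_sum (s := P.powerset)
      (f := fun S => if ((∏ p ∈ S, p : ℕ) : ℤ) ∣ c then ((∏ p ∈ S, p : ℕ) : ℝ) else 0)
      (fun S _ => by split_ifs <;> positivity)
      (Finset.mem_powerset.mpr (Finset.filter_subset (fun p : ℕ => (p : ℤ) ∣ c) P))
    rw [if_pos hdv] at this
    exact this
  calc ∑ c ∈ Finset.Icc (-⌊C⌋) ⌊C⌋, (if c ≠ 0 ∧ |(c : ℝ)| ≤ C then W c else 0)
      ≤ ∑ c ∈ Finset.Icc (-⌊C⌋) ⌊C⌋, K * ∑ S ∈ P.powerset,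
          (if c ≠ 0 ∧ ((∏ p ∈ S, p : ℕ) : ℤ) ∣ c then ((∏ p ∈ S, p : ℕ) : ℝ) else 0) := by
        refine Finset.sum_le_sum fun c _ => ?_
        split_ifs with h
        · refine (hW c).trans (mul_le_mul_of_nonneg_left ((hpt c).trans (le_of_eq ?_)) hK)
          simp [h.1]
        · exact mul_nonneg hK (Finset.sum_nonneg fun S _ => by split_ifs <;> positivity)
    _ = K * ∑ S ∈ P.powerset, ∑ c ∈ Finset.Icc (-⌊C⌋) ⌊C⌋,
          (if c ≠ 0 ∧ ((∏ p ∈ S, p : ℕ) : ℤ) ∣ c then ((∏ p ∈ S, p : ℕ) : ℝ) else 0) := by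
        rw [← Finset.mul_sum, Finset.sum_comm]
    _ ≤ K * ∑ S ∈ P.powerset, 2 * C := by
        refine mul_le_mul_of_nonneg_left (Finset.sum_le_sum fun S hS => ?_) hK
        rw [← Finset.sum_filter, Finset.sum_const, nsmul_eq_mul]
        have hd : 0 < ∏ p ∈ S, p :=
          Finset.prod_pos fun p hp => (hP p (Finset.mem_powerset.mp hS hp)).pos
        have h1 := count_mult ⌊C⌋ _ hd hn
        generalize (∏ p ∈ S, p) = d at *
        have hd' : (0 : ℤ) < d := by exact_mod_cast hd
        have h2 : (⌊C⌋ / (d : ℤ)) * d ≤ ⌊C⌋ := Int.ediv_mul_le _ hd'.ne'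
        have h3 : (((Finset.Icc (-⌊C⌋) ⌊C⌋).filter (fun c : ℤ => c ≠ 0 ∧ (d : ℤ) ∣ c)).card : ℤ) * d
          ≤ 2 * ⌊C⌋ := by nlinarith
        have h4 : ((((Finset.Icc (-⌊C⌋) ⌊C⌋).filter
          (fun c : ℤ => c ≠ 0 ∧ (d : ℤ) ∣ c)).card : ℕ) : ℝ) * d ≤ 2 * (⌊C⌋ : ℝ) := by exact_mod_cast h3
        linarith [Int.floor_le C]
    _ = K * (2 * C * 2 ^ P.card) := by
        rw [Finset.sum_const, Finset.card_powerset, nsmul_eq_mul]; push_cast; ring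

lemma eps_bound (ε : ℝ) (hε : 0 < ε) :
    ∃ K : ℝ, 0 < K ∧ ∀ n : ℕ, n ≠ 0 → (12 : ℝ) ^ n.primeFactors.card ≤ K * (n : ℝ) ^ ε := by
  obtain ⟨M, hM⟩ := exists_nat_gt ((12 : ℝ) ^ (1 / ε))
  refine ⟨12 ^ M, by positivity, fun n hn => ?_⟩
  have h1 : ∀ p ∈ n.primeFactors, (12 : ℝ) ≤ (if p < M then 12 else 1) * (p : ℝ) ^ ε := by
    intro p hp
    have hp1 : (1 : ℝ) ≤ p := by exact_mod_cast (Nat.prime_of_mem_primeFactors hp).one_le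
    split_ifs with h
    · have := Real.one_le_rpow hp1 hε.le
      linarith
    · have hp2 : (12 : ℝ) ^ (1 / ε) ≤ p := hM.le.trans (by exact_mod_cast not_lt.mp h)
      have := Real.rpow_le_rpow (by positivity) hp2 hε.le
      rw [← Real.rpow_mul (by norm_num), one_div_mul_cancel hε.ne', Real.rpow_one] at this
      linarith
  rw [← Finset.prod_const]
  refine (Finset.prod_le_prod (fun _ _ => by norm_num) h1).trans ?_
  rw [Finset.prod_mul_distrib]
  refine mul_le_mul ?_ ?_ (Finset.prod_nonneg fun p _ => by positivity) (by positivity)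
  · rw [← Finset.prod_filter, Finset.prod_const]
    refine pow_le_pow_right₀ (by norm_num) ?_
    calc _ ≤ (Finset.range M).card := Finset.card_le_card (by
            intro p hp
            exact Finset.mem_range.mpr (Finset.mem_filter.mp hp).2)
      _ = M := Finset.card_range M
  · rw [Real.finsetProd_rpow _ _ (fun p _ => by positivity)]
    refine Real.rpow_le_rpow (by positivity) ?_ hε.le
    rw [← Nat.cast_prod]
    exact_mod_cast Nat.le_of_dvd (Nat.pos_of_ne_zero hn) (Nat.prod_primeFactors_dvd n)

end WB

namespace WB

/-- The Weyl element. -/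
def SS : Matrix (Fin 2) (Fin 2) ℤ := !![0, 1; -1, 0]

/-- Its inverse. -/
def SI : Matrix (Fin 2) (Fin 2) ℤ := !![0, -1; 1, 0]

lemma SS_SI : SS * SI = 1 := by
  ext i j; fin_cases i <;> fin_cases j <;> simp [SS, SI]

lemma SI_SS : SI * SS = 1 := by
  ext i j; fin_cases i <;> fin_cases j <;> simp [SS, SI]

lemma SS_inj : Function.Injective (fun τ : Matrix (Fin 2) (Fin 2) ℤ => τ * SS) := by
  intro a b h
  have := congrArg (· * SI) h
  simpa [Matrix.mul_assoc, SS_SI] using this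

lemma char_neg {n : ℕ} (ψ : DirichletCharacter ℂ n) (x : ZMod n) : ψ (-x) = ψ (-1) * ψ x := by
  rw [← map_mul, neg_one_mul]

lemma char_neg_one {n : ℕ} (ψ : DirichletCharacter ℂ n) :
    ψ (-1) * (starRingEnd ℂ) (ψ (-1)) = 1 := by
  have h : ψ (-1) ^ 2 = 1 := by rw [← map_pow]; simp
  rw [Complex.mul_conj, Complex.normSq_eq_norm_sq,
    Complex.norm_eq_one_of_pow_eq_one h (by norm_num)]
  simp

lemma twist {Q₁ Q₂ : ℕ} {m₁ n₁ m₂ n₂ : ℕ}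
    (χ₁ : DirichletCharacter ℂ m₁) (ψ₁ : DirichletCharacter ℂ n₁)
    (χ₂ : DirichletCharacter ℂ m₂) (ψ₂ : DirichletCharacter ℂ n₂)
    (T : Finset (Matrix (Fin 2) (Fin 2) ℤ))
    (hT : ∀ τ ∈ T, τ.det = 1)
    (hT' : ∀ g : Matrix (Fin 2) (Fin 2) ℤ, g.det = 1 →
          ∃! τ, τ ∈ T ∧ ∃ γ, InGamma2 Q₁ Q₂ γ ∧ g = γ * τ) :
    ∃ T' : Finset (Matrix (Fin 2) (Fin 2) ℤ), (∀ τ ∈ T', τ.det = 1) ∧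
      (∀ g : Matrix (Fin 2) (Fin 2) ℤ, g.det = 1 →
          ∃! τ, τ ∈ T' ∧ ∃ γ, InGamma2 Q₁ Q₂ γ ∧ g = γ * τ) ∧
      ∀ e b : ℤ,
        ∑ τ ∈ T, al χ₁ ψ₁ χ₂ ψ₂ (τ * !![e, b; 0, e]) * (starRingEnd ℂ) (al χ₁ ψ₁ χ₂ ψ₂ τ) =
        ∑ τ ∈ T', al ψ₁ χ₁ ψ₂ χ₂ (τ * !![e, 0; -b, e]) * (starRingEnd ℂ) (al ψ₁ χ₁ ψ₂ χ₂ τ) := by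
  classical
  have dS : SS.det = 1 := by simp [SS, Matrix.det_fin_two_of]
  have dI : SI.det = 1 := by simp [SI, Matrix.det_fin_two_of]
  refine ⟨T.image (fun τ => τ * SS), ?_, ?_, ?_⟩
  · intro τ hτ
    obtain ⟨τ, h, rfl⟩ := Finset.mem_image.mp hτ
    rw [Matrix.det_mul, hT τ h, dS, one_mul]
  · intro g hg
    obtain ⟨τ, ⟨hτ, γ, hγ, h⟩, hu⟩ := hT' (g * SI) (by rw [Matrix.det_mul, hg, dI, one_mul])
    refine ⟨τ * SS, ⟨Finset.mem_image_of_mem _ hτ, γ, hγ, ?_⟩, ?_⟩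
    · rw [← Matrix.mul_assoc, ← h, Matrix.mul_assoc, SI_SS, mul_one]
    · rintro τ' ⟨hτ', γ', hγ', h'⟩
      obtain ⟨τ₁, h1, rfl⟩ := Finset.mem_image.mp hτ'
      have := hu τ₁ ⟨h1, γ', hγ', by
        rw [h', Matrix.mul_assoc, Matrix.mul_assoc, SS_SI, mul_one]⟩
      rw [this]
  · intro e b
    rw [Finset.sum_image (fun a _ b _ h => SS_inj h)]
    refine Finset.sum_congr rfl fun τ _ => ?_
    have hs : ∀ g, al ψ₁ χ₁ ψ₂ χ₂ (g * SS) = (ψ₁ (-1) * ψ₂ (-1)) * al χ₁ ψ₁ χ₂ ψ₂ g := by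
      intro g
      simp only [al, SS, Matrix.mul_apply, Fin.sum_univ_two, Matrix.of_apply, Matrix.cons_val',
        Matrix.cons_val_zero, Matrix.cons_val_one, Matrix.cons_val_fin_one, mul_zero, zero_add,
        mul_one, add_zero, mul_neg, Int.cast_neg]
      rw [char_neg ψ₁, char_neg ψ₂]
      ring
    have hm : τ * SS * !![e, 0; -b, e] = (τ * !![e, b; 0, e]) * SS := by
      rw [Matrix.mul_assoc, Matrix.mul_assoc]
      congr 1
      ext i j; fin_cases i <;> fin_cases j <;> simp [SS]
    rw [hm, hs, hs]
    simp only [map_mul]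
    have k1 := char_neg_one ψ₁
    have k2 := char_neg_one ψ₂
    linear_combination (-(al χ₁ ψ₁ χ₂ ψ₂ (τ * !![e, b; 0, e]) * (starRingEnd ℂ) (al χ₁ ψ₁ χ₂ ψ₂ τ))) *
      (ψ₁ (-1) * (starRingEnd ℂ) (ψ₁ (-1)) * k2 + k1)

lemma final_bound {ε K : ℝ}
    (hK : ∀ n : ℕ, n ≠ 0 → (12 : ℝ) ^ n.primeFactors.card ≤ K * (n : ℝ) ^ ε)
    {Q₁ Q₂ : ℕ} (h₁ : 0 < Q₁) (h₂ : 0 < Q₂) (C M₁ M₂ M₃ : ℝ) (hC : 1 ≤ C)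
    (hM : 0 ≤ M₁ * M₂ * M₃) (W : ℤ → ℝ)
    (hW : ∀ c : ℤ, W c ≤ (6 ^ (Q₁ * Q₂).primeFactors.card * ((Q₁ : ℝ) * Q₂) * (M₁ * M₂ * M₃)) *
      ∏ p ∈ (Q₁ * Q₂).primeFactors, (Int.gcd c p : ℝ)) :
    (∑' c : ℤ, if c ≠ 0 ∧ |(c : ℝ)| ≤ C then W c else 0) ≤
      (2 * K) * C * ((Q₁ : ℝ) * (Q₂ : ℝ)) ^ ((1 : ℝ) + ε) * M₁ * M₂ * M₃ := by
  have hne : Q₁ * Q₂ ≠ 0 := (Nat.mul_pos h₁ h₂).ne'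
  have hq : (0 : ℝ) < (Q₁ : ℝ) * Q₂ := by positivity
  refine (sum_gcd_bound _ (fun p hp => Nat.prime_of_mem_primeFactors hp) C hC _
    (mul_nonneg (by positivity) hM) W hW).trans ?_
  have h := hK _ hne
  push_cast at h
  rw [Real.rpow_add hq, Real.rpow_one]
  have e12 : (6 : ℝ) ^ (Q₁ * Q₂).primeFactors.card * 2 ^ (Q₁ * Q₂).primeFactors.card =
      12 ^ (Q₁ * Q₂).primeFactors.card := by rw [← mul_pow]; norm_num
  calc _ = (12 ^ (Q₁ * Q₂).primeFactors.card) * (2 * C * ((Q₁ : ℝ) * Q₂) * (M₁ * M₂ * M₃)) := by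
        rw [← e12]; ring
    _ ≤ (K * ((Q₁ : ℝ) * Q₂) ^ ε) * (2 * C * ((Q₁ : ℝ) * Q₂) * (M₁ * M₂ * M₃)) :=
        mul_le_mul_of_nonneg_right h (mul_nonneg (by positivity) hM)
    _ = _ := by ring

end WB

/-- Lemma 11.1: character sum bound for `w(σ)`.  -/
theorem character_sum_w_bound :
    ∀ ε : ℝ, 0 < ε → ∃ cst : ℝ, 0 < cst ∧
      ∀ (Q₁ Q₂ : ℕ), 0 < Q₁ → 0 < Q₂ → Squarefree Q₁ → Squarefree Q₂ →
      ∀ (m₁ n₁ : ℕ), m₁ ∣ Q₁ → n₁ ∣ Q₁ → ∀ (m₂ n₂ : ℕ), m₂ ∣ Q₂ → n₂ ∣ Q₂ →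
      ∀ (χ₁ : DirichletCharacter ℂ m₁) (ψ₁ : DirichletCharacter ℂ n₁)
        (χ₂ : DirichletCharacter ℂ m₂) (ψ₂ : DirichletCharacter ℂ n₂)
        (T : Finset (Matrix (Fin 2) (Fin 2) ℤ)),
        (∀ τ ∈ T, τ.det = 1) →
        (∀ g : Matrix (Fin 2) (Fin 2) ℤ, g.det = 1 →
          ∃! τ, τ ∈ T ∧ ∃ γ, InGamma2 Q₁ Q₂ γ ∧ g = γ * τ) →
        -- the weight `α` and the orbital sum `w`
        ∀ C B : ℝ, 1 ≤ C → 1 ≤ B → ∀ e : ℤ, e = 1 ∨ e = -1 →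
          (letI α : Matrix (Fin 2) (Fin 2) ℤ → ℂ := fun g =>
            χ₁ ((g 0 0 : ZMod m₁)) * ψ₁ ((g 0 1 : ZMod n₁))
              * χ₂ ((g 1 0 : ZMod m₂)) * ψ₂ ((g 1 1 : ZMod n₂))
          letI w : Matrix (Fin 2) (Fin 2) ℤ → ℝ := fun σ =>
            ‖∑ τ ∈ T, α (τ * σ) * (starRingEnd ℂ) (α τ)‖
          ((∑' c : ℤ, if c ≠ 0 ∧ |(c : ℝ)| ≤ C then w !![e, 0; c, e] else 0)
              ≤ cst * C * ((Q₁ : ℝ) * (Q₂ : ℝ)) ^ ((1 : ℝ) + ε)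
                * (∏ p ∈ Q₁.primeFactors \ (Nat.gcd Q₁ Q₂).primeFactors,
                    ((localCond χ₁ p : ℝ))⁻¹)
                * (∏ p ∈ Q₂.primeFactors \ (Nat.gcd Q₁ Q₂).primeFactors,
                    ((localCond χ₂ p : ℝ))⁻¹)
                * (∏ p ∈ (Nat.gcd Q₁ Q₂).primeFactors,
                    ((max (localCond χ₁ p) (localCond χ₂ p) : ℝ))⁻¹)) ∧
          ((∑' b : ℤ, if b ≠ 0 ∧ |(b : ℝ)| ≤ B then w !![e, b; 0, e] else 0)
              ≤ cst * B * ((Q₁ : ℝ) * (Q₂ : ℝ)) ^ ((1 : ℝ) + ε)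
                * (∏ p ∈ Q₁.primeFactors \ (Nat.gcd Q₁ Q₂).primeFactors,
                    ((localCond ψ₁ p : ℝ))⁻¹)
                * (∏ p ∈ Q₂.primeFactors \ (Nat.gcd Q₁ Q₂).primeFactors,
                    ((localCond ψ₂ p : ℝ))⁻¹)
                * (∏ p ∈ (Nat.gcd Q₁ Q₂).primeFactors,
                    ((max (localCond ψ₁ p) (localCond ψ₂ p) : ℝ))⁻¹))) := by
  intro ε hε
  obtain ⟨K, hK0, hK⟩ := WB.eps_bound ε hε
  refine ⟨2 * K, by positivity, ?_⟩
  intro Q₁ Q₂ hQ₁ hQ₂ h₁ h₂ m₁ n₁ hm₁ hn₁ m₂ n₂ hm₂ hn₂ χ₁ ψ₁ χ₂ ψ₂ T hT hT' C B hC hB e _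
  have hpos : ∀ {m m' : ℕ} (χ : DirichletCharacter ℂ m) (χ' : DirichletCharacter ℂ m'),
      0 ≤ (∏ p ∈ Q₁.primeFactors \ (Nat.gcd Q₁ Q₂).primeFactors,
                    ((localCond χ p : ℝ))⁻¹)
                * (∏ p ∈ Q₂.primeFactors \ (Nat.gcd Q₁ Q₂).primeFactors,
                    ((localCond χ' p : ℝ))⁻¹)
                * (∏ p ∈ (Nat.gcd Q₁ Q₂).primeFactors,
                    ((max (localCond χ p) (localCond χ' p) : ℝ))⁻¹) := by
    intro m m' χ χ'
    refine mul_nonneg (mul_nonneg ?_ ?_) ?_ <;>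
      exact Finset.prod_nonneg fun p _ => by positivity
  constructor
  · exact WB.final_bound hK hQ₁ hQ₂ C _ _ _ hC (hpos χ₁ χ₂) _
      (fun c => WB.w_bound' h₁ h₂ hm₁ hn₁ hm₂ hn₂ χ₁ ψ₁ χ₂ ψ₂ T hT hT' e c)
  · obtain ⟨T', hT1, hT2, hT3⟩ := WB.twist χ₁ ψ₁ χ₂ ψ₂ T hT hT'
    refine WB.final_bound hK hQ₁ hQ₂ B _ _ _ hB (hpos ψ₁ ψ₂) _ (fun b => ?_)
    have := WB.w_bound' h₁ h₂ hn₁ hm₁ hn₂ hm₂ ψ₁ χ₁ ψ₂ χ₂ T' hT1 hT2 e (-b)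
    rw [← hT3 e b] at this
    simp only [Int.gcd_neg, Int.neg_gcd] at this
    exact this
end

section
/- Let q be a squarefree positive integer and t : ℤ/qℤ → ℂ. Then for every ε > 0 there is a constant c(ε) > 0 such that Σ_{r₁, r₂ mod q} |t(r₁) t(r₂)| · Π_{p ∣ q} ( 𝟙_{r₁ ≡ r₂ (mod p)} + p⁻¹ ) ≤ c(ε) · q^ε · Σ_{r mod q} |t(r)|². -/
open scoped BigOperators

lemma aux_count (q d r : ℕ) (hd : 0 < d) (h : d ∣ q) :
    (∑ s ∈ Finset.range q, if ((d : ℤ)) ∣ ((r : ℤ) - (s : ℤ)) then (1 : ℝ) else 0)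
      = (q : ℝ) / d := by
  have h1 := Nat.count_modEq_card q hd r
  rw [Nat.count_eq_card_filter_range] at h1
  rw [Finset.sum_boole]
  have h2 : (Finset.range q).filter (fun s : ℕ => (d : ℤ) ∣ ((r : ℤ) - (s : ℤ)))
      = (Finset.range q).filter (fun s => s ≡ r [MOD d]) := by
    apply Finset.filter_congr
    intro s _
    exact Nat.modEq_iff_dvd.symm
  rw [h2, h1, Nat.mod_eq_zero_of_dvd h]
  simp [Nat.cast_div h (by positivity : (d : ℝ) ≠ 0)]

lemma aux_row (q r : ℕ) (hq : 0 < q) (hs : Squarefree q) :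
    (∑ s ∈ Finset.range q, ∏ p ∈ q.primeFactors,
      ((if ((p : ℤ)) ∣ ((r : ℤ) - (s : ℤ)) then (1 : ℝ) else 0) + (p : ℝ)⁻¹))
      = 2 ^ q.primeFactors.card := by
  simp_rw [Finset.prod_add]
  rw [Finset.sum_comm]
  have key : ∀ S ∈ q.primeFactors.powerset,
      (∑ s ∈ Finset.range q,
        (∏ p ∈ S, (if ((p : ℤ)) ∣ ((r : ℤ) - (s : ℤ)) then (1 : ℝ) else 0)) *
          ∏ p ∈ q.primeFactors \ S, (p : ℝ)⁻¹) = 1 := by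
    intro S hS
    have hS' := Finset.mem_powerset.mp hS
    have hprime : ∀ p ∈ S, p.Prime := fun p hp => Nat.prime_of_mem_primeFactors (hS' hp)
    have hqp : (∏ p ∈ q.primeFactors \ S, p) * ∏ p ∈ S, p = q := by
      rw [Finset.prod_sdiff hS', Nat.prod_primeFactors_of_squarefree hs]
    have hd : 0 < ∏ p ∈ S, p := Finset.prod_pos fun p hp => (hprime p hp).pos
    have hdq : (∏ p ∈ S, p) ∣ q := Dvd.intro_left _ hqp
    have hind : ∀ s : ℕ,
        (∏ p ∈ S, (if ((p : ℤ)) ∣ ((r : ℤ) - (s : ℤ)) then (1 : ℝ) else 0))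
        = if (((∏ p ∈ S, p : ℕ) : ℤ)) ∣ ((r : ℤ) - (s : ℤ)) then (1 : ℝ) else 0 := by
      intro s
      rw [Finset.prod_ite_zero, Finset.prod_const_one]
      refine if_congr ?_ rfl rfl
      constructor
      · intro hh
        rw [Nat.cast_prod]
        refine Finset.prod_dvd_of_coprime ?_ hh
        intro a ha b hb hab
        exact Nat.isCoprime_iff_coprime.mpr
          ((Nat.coprime_primes (hprime a ha) (hprime b hb)).mpr hab)
      · intro hh p hp
        exact (Int.natCast_dvd_natCast.mpr (Finset.dvd_prod_of_mem _ hp)).trans hh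
    simp_rw [hind]
    rw [← Finset.sum_mul, aux_count q _ r hd hdq, Finset.prod_inv_distrib, ← Nat.cast_prod]
    have hq' : (q : ℝ) = ((∏ p ∈ q.primeFactors \ S, p : ℕ) : ℝ) * ((∏ p ∈ S, p : ℕ) : ℝ) := by
      exact_mod_cast hqp.symm
    have hq0 : (q : ℝ) ≠ 0 := by positivity
    rw [hq'] at hq0
    have n1 := left_ne_zero_of_mul hq0
    have n2 := right_ne_zero_of_mul hq0
    generalize ((∏ p ∈ q.primeFactors \ S, p : ℕ) : ℝ) = A at *
    generalize ((∏ p ∈ S, p : ℕ) : ℝ) = B at *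
    rw [hq']
    field_simp
  rw [Finset.sum_congr rfl key]
  simp [Finset.card_powerset]

lemma aux_omega (ε : ℝ) (hε : 0 < ε) : ∃ c : ℝ, 0 < c ∧ ∀ q : ℕ, 0 < q → Squarefree q →
    (2 : ℝ) ^ q.primeFactors.card ≤ c * (q : ℝ) ^ ε := by
  obtain ⟨N, hN⟩ := exists_nat_ge ((2 : ℝ) ^ (1 / ε))
  refine ⟨2 ^ N, by positivity, fun q hq hs => ?_⟩
  have hprod : (q : ℝ) ^ ε = ∏ p ∈ q.primeFactors, (p : ℝ) ^ ε := by
    rw [Real.finsetProd_rpow _ _ (fun _ _ => by positivity)]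
    congr 1
    rw [← Nat.cast_prod, Nat.prod_primeFactors_of_squarefree hs]
  have h1 : (2 : ℝ) ^ q.primeFactors.card
      ≤ ∏ p ∈ q.primeFactors, ((if p < N then (2 : ℝ) else 1) * (p : ℝ) ^ ε) := by
    rw [← Finset.prod_const]
    apply Finset.prod_le_prod
    · intros; norm_num
    · intro p hp
      have hp1 : (1 : ℝ) ≤ p := by exact_mod_cast (Nat.prime_of_mem_primeFactors hp).one_le
      split_ifs with h
      · have := Real.one_le_rpow hp1 hε.le
        linarith
      · have h3 : (2 : ℝ) ^ (1 / ε) ≤ p := hN.trans (by exact_mod_cast not_lt.mp h)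
        have := Real.rpow_le_rpow (by positivity) h3 hε.le
        rw [← Real.rpow_mul (by norm_num), one_div_mul_cancel hε.ne', Real.rpow_one] at this
        linarith
  refine h1.trans ?_
  rw [Finset.prod_mul_distrib, ← hprod]
  gcongr
  rw [← Finset.prod_filter, Finset.prod_const]
  apply pow_le_pow_right₀ (by norm_num)
  calc _ ≤ (Finset.range N).card := Finset.card_le_card (by
        intro p hp; simp at hp ⊢; exact hp.2)
    _ = N := by simp

theorem balanced_diagonal_bound :
    ∀ ε : ℝ, 0 < ε → ∃ c : ℝ, 0 < c ∧
      ∀ (q : ℕ), 0 < q → Squarefree q → ∀ t : ZMod q → ℂ,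
        (∑ r₁ ∈ Finset.range q, ∑ r₂ ∈ Finset.range q,
            ‖t (r₁ : ZMod q) * t (r₂ : ZMod q)‖ *
              ∏ p ∈ q.primeFactors,
                ((if ((p : ℤ)) ∣ ((r₁ : ℤ) - (r₂ : ℤ)) then (1 : ℝ) else 0) + (p : ℝ)⁻¹))
          ≤ c * (q : ℝ) ^ (ε : ℝ) *
            ∑ r ∈ Finset.range q, ‖t (r : ZMod q)‖ ^ 2 := by
  intro ε hε
  obtain ⟨c, hc, h⟩ := aux_omega ε hε
  refine ⟨c, hc, fun q hq hs t => ?_⟩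
  refine le_trans ?_ (mul_le_mul_of_nonneg_right (h q hq hs) (by positivity))
  set K : ℕ → ℕ → ℝ := fun r s => ∏ p ∈ q.primeFactors,
    ((if ((p : ℤ)) ∣ ((r : ℤ) - (s : ℤ)) then (1 : ℝ) else 0) + (p : ℝ)⁻¹) with hK
  have hrow : ∀ r, ∑ s ∈ Finset.range q, K r s = 2 ^ q.primeFactors.card :=
    fun r => aux_row q r hq hs
  have hsymm : ∀ r s, K r s = K s r := by
    intro r s
    simp only [hK]
    refine Finset.prod_congr rfl fun p _ => ?_
    simp only [dvd_sub_comm]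
  have hpos : ∀ r s, 0 ≤ K r s := by
    intro r s
    refine Finset.prod_nonneg fun p _ => ?_
    split_ifs <;> positivity
  have e1 : ∑ r ∈ Finset.range q, ∑ s ∈ Finset.range q, ‖t r‖ ^ 2 * K r s
      = 2 ^ q.primeFactors.card * ∑ r ∈ Finset.range q, ‖t r‖ ^ 2 := by
    simp_rw [← Finset.mul_sum, hrow, ← Finset.sum_mul]
    ring
  have e2 : ∑ r ∈ Finset.range q, ∑ s ∈ Finset.range q, ‖t s‖ ^ 2 * K r s
      = 2 ^ q.primeFactors.card * ∑ r ∈ Finset.range q, ‖t r‖ ^ 2 := by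
    rw [Finset.sum_comm, ← e1]
    simp_rw [hsymm]
  calc _ ≤ ∑ r ∈ Finset.range q, ∑ s ∈ Finset.range q,
        ((‖t r‖ ^ 2 * K r s) / 2 + (‖t s‖ ^ 2 * K r s) / 2) := by
        refine Finset.sum_le_sum fun r _ => Finset.sum_le_sum fun s _ => ?_
        rw [norm_mul]
        change _ * K r s ≤ _
        nlinarith [mul_nonneg (sq_nonneg (‖t r‖ - ‖t s‖)) (hpos r s)]
    _ = _ := by
        simp_rw [Finset.sum_add_distrib, ← Finset.sum_div]
        rw [e1, e2]; ring
end

section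
/- For a positive integer q, let ℙ¹_q denote the set {(x,y) ∈ (ℤ/qℤ)² : gcd(x,y,q) = 1} modulo the equivalence (x₁,y₁) ∼ (x₂,y₂) iff (x₁,y₁) = (λx₂, λy₂) for some λ ∈ (ℤ/qℤ)^×. Then |ℙ¹_q| = q · Π_{p ∣ q} (1 + p⁻¹). For positive integers q₁, q₂ with q₀ = gcd(q₁,q₂), define π_{q₁,q₂} : SL₂(ℤ) → ℙ¹_{q₁} × ℙ¹_{q₂} by (a,b;c,d) ↦ ([a:b] mod q₁, [c:d] mod q₂). Then: (i) π_{q₁,q₂} is invariant under left multiplication by Γ₂(q₁,q₂) and induces a bijection from Γ₂(q₁,q₂)\SL₂(ℤ) onto the image of π_{q₁,q₂}; (ii) the image of π_{q₁,q₂} equals the set of pairs ([a:b],[c:d]) with gcd(ad − bc, q₀) = 1 (a condition independent of the choice of representatives); (iii) π_{q₁,q₂} is surjective if and only if q₀ = 1. -/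
open scoped BigOperators

/-- Pairs `(x,y) ∈ (ℤ/qℤ)²` with `gcd(x,y,q) = 1`, i.e. generating the unit ideal. -/
def CoprimePair (q : ℕ) := {v : ZMod q × ZMod q // IsCoprime v.1 v.2}

/-- The equivalence `(x₁,y₁) ∼ (x₂,y₂)` iff `(x₁,y₁) = (λx₂, λy₂)` for a unit `λ`. -/
def projSetoid (q : ℕ) : Setoid (CoprimePair q) where
  r v w := ∃ u : (ZMod q)ˣ, v.1.1 = (u : ZMod q) * w.1.1 ∧ v.1.2 = (u : ZMod q) * w.1.2
  iseqv := by
    constructor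
    · intro v; exact ⟨1, by simp, by simp⟩
    · rintro v w ⟨u, h1, h2⟩
      refine ⟨u⁻¹, ?_, ?_⟩
      · rw [h1, ← mul_assoc, ← Units.val_mul, inv_mul_cancel, Units.val_one, one_mul]
      · rw [h2, ← mul_assoc, ← Units.val_mul, inv_mul_cancel, Units.val_one, one_mul]
    · rintro a b c ⟨u, h1, h2⟩ ⟨u', h1', h2'⟩
      exact ⟨u * u', by rw [h1, h1', ← mul_assoc, Units.val_mul],
        by rw [h2, h2', ← mul_assoc, Units.val_mul]⟩

/-- The projective line `ℙ¹_q`. -/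
def ProjLine (q : ℕ) := Quotient (projSetoid q)

/-- The map `π_{q₁,q₂} : SL₂(ℤ) → ℙ¹_{q₁} × ℙ¹_{q₂}`, `(a,b;c,d) ↦ ([a:b], [c:d])`. -/
def piMap (q₁ q₂ : ℕ) (g : Matrix.SpecialLinearGroup (Fin 2) ℤ) :
    ProjLine q₁ × ProjLine q₂ :=
  have hdet : g.1 0 0 * g.1 1 1 - g.1 0 1 * g.1 1 0 = 1 := by
    have h := g.2; rwa [Matrix.det_fin_two] at h
  (Quotient.mk (projSetoid q₁)
    ⟨(((g.1 0 0 : ℤ) : ZMod q₁), ((g.1 0 1 : ℤ) : ZMod q₁)), by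
      refine ⟨((g.1 1 1 : ℤ) : ZMod q₁), -((g.1 1 0 : ℤ) : ZMod q₁), ?_⟩
      have h2 : ((g.1 0 0 * g.1 1 1 - g.1 0 1 * g.1 1 0 : ℤ) : ZMod q₁) = 1 := by
        rw [hdet]; norm_num
      push_cast at h2
      linear_combination h2⟩,
   Quotient.mk (projSetoid q₂)
    ⟨(((g.1 1 0 : ℤ) : ZMod q₂), ((g.1 1 1 : ℤ) : ZMod q₂)), by
      refine ⟨-((g.1 0 1 : ℤ) : ZMod q₂), ((g.1 0 0 : ℤ) : ZMod q₂), ?_⟩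
      have h2 : ((g.1 0 0 * g.1 1 1 - g.1 0 1 * g.1 1 0 : ℤ) : ZMod q₂) = 1 := by
        rw [hdet]; norm_num
      push_cast at h2
      linear_combination h2⟩)

/-- Membership in `Γ₂(q₁,q₂)` for `g ∈ SL₂(ℤ)`: `q₁ ∣ b` and `q₂ ∣ c`. -/
def InGamma2SL (q₁ q₂ : ℕ) (γ : Matrix.SpecialLinearGroup (Fin 2) ℤ) : Prop :=
  (q₁ : ℤ) ∣ γ.1 0 1 ∧ (q₂ : ℤ) ∣ γ.1 1 0


lemma aux_unit_left {R : Type*} [CommRing R] {x : R} (h : IsUnit x) (y : R) : IsCoprime x y := by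
  obtain ⟨z, hz⟩ := h.exists_left_inv
  exact ⟨z, 0, by rw [hz]; ring⟩

lemma aux_exists_add (a b n : ℤ) (hn : n ≠ 0) (h : ∃ s t k : ℤ, s * a + t * b + k * n = 1) :
    ∃ m : ℤ, IsCoprime (a + m * b) n := by
  classical
  obtain ⟨s, t, k, h⟩ := h
  refine ⟨((∏ p ∈ n.natAbs.primeFactors.filter (fun p : ℕ => ¬ (p : ℤ) ∣ a), p : ℕ) : ℤ), ?_⟩
  rw [Int.isCoprime_iff_gcd_eq_one]
  by_contra hg
  obtain ⟨p, hp, hpd⟩ := Nat.exists_prime_and_dvd hg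
  have h1 : (p : ℤ) ∣ _ := (Int.natCast_dvd_natCast.2 hpd).trans (Int.gcd_dvd_left _ _)
  have h2 : (p : ℤ) ∣ n := (Int.natCast_dvd_natCast.2 hpd).trans (Int.gcd_dvd_right _ _)
  have hpp : Prime (p : ℤ) := Nat.prime_iff_prime_int.1 hp
  have hmem : p ∈ n.natAbs.primeFactors := by
    rw [Nat.mem_primeFactors]
    exact ⟨hp, by simpa using Int.natAbs_dvd_natAbs.2 h2, by simpa using hn⟩
  by_cases hpa : (p : ℤ) ∣ a
  · have h3 := (Int.dvd_add_right hpa).1 h1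
    rcases hpp.dvd_or_dvd h3 with h4 | h4
    · rw [Int.natCast_dvd_natCast, hp.prime.dvd_finsetProd_iff] at h4
      obtain ⟨r, hr, hpr⟩ := h4
      rw [Finset.mem_filter, Nat.mem_primeFactors] at hr
      rw [Nat.prime_dvd_prime_iff_eq hp hr.1.1] at hpr
      subst hpr
      exact hr.2 hpa
    · apply hpp.not_dvd_one
      rw [← h]
      exact dvd_add (dvd_add (hpa.mul_left _) (h4.mul_left _)) (h2.mul_left _)
  · apply hpa
    refine (Int.dvd_add_left ?_).1 h1
    apply Dvd.dvd.mul_right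
    rw [Int.natCast_dvd_natCast]
    exact Finset.dvd_prod_of_mem (fun p => p) (Finset.mem_filter.2 ⟨hmem, hpa⟩)

lemma aux_lift_coprime (q : ℕ) (a b : ℤ) (h : IsCoprime (a : ZMod q) (b : ZMod q)) :
    ∃ s t k : ℤ, s * a + t * b + k * q = 1 := by
  obtain ⟨s, t, h⟩ := h
  obtain ⟨s, rfl⟩ := ZMod.intCast_surjective s
  obtain ⟨t, rfl⟩ := ZMod.intCast_surjective t
  have h2 : ((s * a + t * b : ℤ) : ZMod q) = ((1 : ℤ) : ZMod q) := by push_cast; exact h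
  rw [ZMod.intCast_eq_intCast_iff_dvd_sub] at h2
  obtain ⟨k, hk⟩ := h2
  exact ⟨s, t, k, by linarith⟩

/-- Core lifting statement, on integers. -/
lemma aux_core (q₁ q₂ : ℕ) (hq₁ : 0 < q₁) (hq₂ : 0 < q₂) (a b c d : ℤ)
    (hv : ∃ s t k : ℤ, s * a + t * b + k * q₁ = 1)
    (hw : ∃ s t k : ℤ, s * c + t * d + k * q₂ = 1)
    (hd : IsCoprime (a * d - b * c) (Nat.gcd q₁ q₂ : ℤ)) :
    ∃ A B C D x : ℤ, A * D - B * C = 1 ∧ IsCoprime (q₁ : ℤ) x ∧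
      (q₁ : ℤ) ∣ A - x * a ∧ (q₁ : ℤ) ∣ B - x * b ∧ (q₂ : ℤ) ∣ C - c ∧ (q₂ : ℤ) ∣ D - d := by
  have hq₁' : (q₁ : ℤ) ≠ 0 := by exact_mod_cast hq₁.ne'
  have hq₂' : (q₂ : ℤ) ≠ 0 := by exact_mod_cast hq₂.ne'
  obtain ⟨a', b', ⟨ka, hka⟩, ⟨kb, hkb⟩, hab⟩ : ∃ a' b' : ℤ, (q₁ : ℤ) ∣ a' - a ∧ (q₁ : ℤ) ∣ b' - b ∧
      IsCoprime a' b' := by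
    obtain ⟨b', kb, hb', hb0⟩ : ∃ b' k : ℤ, b' = b + k * q₁ ∧ b' ≠ 0 := by
      by_cases hb : b = 0
      · exact ⟨q₁, 1, by simp [hb], hq₁'⟩
      · exact ⟨b, 0, by simp, hb⟩
    obtain ⟨s, t, k, h⟩ := hv
    obtain ⟨m, hm⟩ := aux_exists_add a q₁ b' hb0 ⟨s, k - t * kb, t, by rw [hb']; linarith⟩
    exact ⟨_, b', ⟨m, by ring⟩, ⟨kb, by rw [hb']; ring⟩, hm⟩
  obtain ⟨s, r, hsr⟩ := hab
  obtain ⟨e, f, hef⟩ := hd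
  obtain ⟨g1, hg1⟩ : ((Nat.gcd q₁ q₂ : ℕ) : ℤ) ∣ q₁ := by exact_mod_cast Nat.gcd_dvd_left _ _
  obtain ⟨i, j, hij⟩ : ∃ i j : ℤ, ((Nat.gcd q₁ q₂ : ℕ) : ℤ) = i * q₁ + j * q₂ :=
    ⟨q₁.gcdA q₂, q₁.gcdB q₂, by rw [Nat.gcd_eq_gcd_ab]; ring⟩
  set D₀ := a' * d - b' * c with hD₀
  set C₀ := c * s + d * r with hC₀
  obtain ⟨D', kD, hD', hD'0, hDq⟩ : ∃ D' k : ℤ, D' = D₀ + k * q₂ ∧ D' ≠ 0 ∧ IsCoprime D' (q₁ : ℤ) := by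
    obtain ⟨m, hm⟩ := aux_exists_add D₀ q₂ q₁ hq₁'
      ⟨e, f * j, f * i - e * (ka * d - kb * c), by
        have ha : a' = a + q₁ * ka := by linarith
        have hb : b' = b + q₁ * kb := by linarith
        rw [hD₀, ha, hb]
        rw [hij] at hef
        linear_combination hef⟩
    by_cases h0 : D₀ + m * q₂ = 0
    · refine ⟨q₂, m + 1, by linear_combination -h0, hq₂', ?_⟩
      rw [h0, isCoprime_zero_left] at hm
      exact (aux_unit_left hm _).symm
    · exact ⟨_, m, rfl, h0, hm⟩
  obtain ⟨s', t', k', hw⟩ := hw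
  have hc : c = C₀ * a' - D₀ * r := by rw [hC₀, hD₀]; linear_combination (-c) * hsr
  have hdd : d = C₀ * b' + D₀ * s := by rw [hC₀, hD₀]; linear_combination (-d) * hsr
  obtain ⟨kC, hC⟩ := aux_exists_add C₀ q₂ D' hD'0
    ⟨s' * a' + t' * b', k' - (t' * s - s' * r) * kD, t' * s - s' * r, by
      rw [hD']; rw [hc, hdd] at hw; linear_combination hw⟩
  obtain ⟨y, x, hyx⟩ : IsCoprime ((C₀ + kC * q₂) * q₁) D' := hC.mul_left hDq.symm
  refine ⟨x * a' + q₁ * y * r, x * b' - q₁ * y * s, (C₀ + kC * q₂) * a' - D' * r,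
    (C₀ + kC * q₂) * b' + D' * s, x, ?_, ⟨y * (C₀ + kC * q₂), D', by linear_combination hyx⟩,
    ⟨x * ka + y * r, by linear_combination x * hka⟩, ⟨x * kb - y * s, by linear_combination x * hkb⟩,
    ⟨kC * a' - kD * r, by rw [hD']; linear_combination -hc⟩,
    ⟨kC * b' + kD * s, by rw [hD']; linear_combination -hdd⟩⟩
  linear_combination (x * D' + q₁ * y * (C₀ + kC * q₂)) * hsr + hyx

lemma aux_card_mul (q : ℕ) (hq : 0 < q) :
    Nat.card (CoprimePair q) = Nat.card (ProjLine q) * q.totient := by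
  have : NeZero q := ⟨hq.ne'⟩
  rw [← ZMod.card_units_eq_totient, ← Nat.card_eq_fintype_card, ← Nat.card_prod]
  symm
  let f : ProjLine q × (ZMod q)ˣ → CoprimePair q := fun z =>
    ⟨((z.2 : ZMod q) * (Quotient.out z.1).1.1, (z.2 : ZMod q) * (Quotient.out z.1).1.2), by
      obtain ⟨s, t, h⟩ := (Quotient.out z.1).2
      refine ⟨s * (z.2⁻¹ : (ZMod q)ˣ), t * (z.2⁻¹ : (ZMod q)ˣ), ?_⟩
      have := z.2.inv_mul
      linear_combination (s * (Quotient.out z.1).1.1 + t * (Quotient.out z.1).1.2) * this + h⟩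
  have hf1 : ∀ z, (Quotient.mk (projSetoid q) (f z)) = z.1 := by
    intro z
    conv_rhs => rw [← Quotient.out_eq z.1]
    exact Quotient.sound ⟨z.2, rfl, rfl⟩
  refine Nat.card_eq_of_bijective f ⟨?_, ?_⟩
  · rintro ⟨x, u⟩ ⟨y, v⟩ h
    have hxy : x = y := by
      have h3 := hf1 (x, u)
      rw [h, hf1 (y, v)] at h3
      exact h3.symm
    subst hxy
    have h1 := congrArg (fun w : CoprimePair q => w.1.1) h
    have h2 := congrArg (fun w : CoprimePair q => w.1.2) h
    simp only [f] at h1 h2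
    obtain ⟨s, t, h⟩ := (Quotient.out x).2
    refine Prod.ext rfl (Units.ext ?_)
    show (u : ZMod q) = v
    linear_combination s * h1 + t * h2 - (u - v : ZMod q) * h
  · intro v
    obtain ⟨u, h1, h2⟩ := Quotient.exact (Quotient.out_eq (Quotient.mk (projSetoid q) v)).symm
    exact ⟨(Quotient.mk (projSetoid q) v, u), Subtype.ext (Prod.ext h1.symm h2.symm)⟩

lemma aux_card_coprime_mul (m n : ℕ) (h : m.Coprime n) :
    Nat.card (CoprimePair (m * n)) = Nat.card (CoprimePair m) * Nat.card (CoprimePair n) := by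
  rw [← Nat.card_prod]
  let e := ZMod.chineseRemainder h
  refine Nat.card_congr
    { toFun := fun v => (⟨((e v.1.1).1, (e v.1.2).1), ?_⟩, ⟨((e v.1.1).2, (e v.1.2).2), ?_⟩)
      invFun := fun z => ⟨(e.symm (z.1.1.1, z.2.1.1), e.symm (z.1.1.2, z.2.1.2)), ?_⟩
      left_inv := ?_
      right_inv := ?_ }
  · exact v.2.map ((RingHom.fst _ _).comp (e : _ →+* ZMod m × ZMod n))
  · exact v.2.map ((RingHom.snd _ _).comp (e : _ →+* ZMod m × ZMod n))
  · obtain ⟨s, t, h1⟩ := z.1.2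
    obtain ⟨s', t', h2⟩ := z.2.2
    refine IsCoprime.map (x := (z.1.1.1, z.2.1.1)) (y := (z.1.1.2, z.2.1.2))
      ⟨(s, s'), (t, t'), Prod.ext h1 h2⟩ (e.symm : ZMod m × ZMod n →+* ZMod (m * n))
  · intro v
    apply Subtype.ext
    simp
  · intro z
    refine Prod.ext (Subtype.ext ?_) (Subtype.ext ?_) <;> simp

lemma aux_prime_pow_isCoprime (p k : ℕ) (hp : p.Prime) (hk : 0 < k) (x y : ZMod (p ^ k)) :
    IsCoprime x y ↔ IsUnit x ∨ IsUnit y := by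
  constructor
  · intro h
    obtain ⟨x, rfl⟩ := ZMod.intCast_surjective x
    obtain ⟨y, rfl⟩ := ZMod.intCast_surjective y
    obtain ⟨s, t, r, h⟩ := aux_lift_coprime _ _ _ h
    have hpp : Prime (p : ℤ) := Nat.prime_iff_prime_int.1 hp
    have key : ∀ z : ℤ, ¬ IsUnit (z : ZMod (p ^ k)) → (p : ℤ) ∣ z := by
      intro z hz
      by_contra hpz
      apply hz
      rw [ZMod.coe_int_isUnit_iff_isCoprime, Nat.cast_pow]
      exact ((hpp.coprime_iff_not_dvd).2 hpz).pow_left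
    by_contra! hc
    apply hpp.not_dvd_one
    rw [← h, Nat.cast_pow]
    exact dvd_add (dvd_add ((key _ hc.1).mul_left _) ((key _ hc.2).mul_left _))
      ((dvd_pow_self _ hk.ne').mul_left _)
  · rintro (h | h)
    · exact aux_unit_left h y
    · exact (aux_unit_left h x).symm

lemma aux_card_prime_pow (p k : ℕ) (hp : p.Prime) (hk : 0 < k) :
    (Nat.card (CoprimePair (p ^ k)) : ℝ) =
      (p ^ k : ℕ).totient * (2 * (p ^ k : ℕ) - (p ^ k : ℕ).totient) := by
  classical
  have : NeZero (p ^ k) := ⟨(pow_pos hp.pos k).ne'⟩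
  set q := p ^ k with hq
  have hU : Nat.card {x : ZMod q // IsUnit x} = q.totient := by
    rw [← ZMod.card_units_eq_totient, ← Nat.card_eq_fintype_card]
    symm
    refine Nat.card_eq_of_bijective (fun u : (ZMod q)ˣ => (⟨u, u.isUnit⟩ : {x : ZMod q // IsUnit x}))
      ⟨fun u v h => Units.ext (congrArg Subtype.val h), ?_⟩
    rintro ⟨_, u, rfl⟩
    exact ⟨u, rfl⟩
  have hN : (Nat.card {x : ZMod q // ¬ IsUnit x} : ℝ) = q - q.totient := by
    have h := Fintype.card_subtype_compl (fun x : ZMod q => IsUnit x)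
    have h' := Fintype.card_subtype_le (fun x : ZMod q => IsUnit x)
    rw [← Nat.card_eq_fintype_card, ← Nat.card_eq_fintype_card (α := {x : ZMod q // IsUnit x}), hU,
      ZMod.card] at h
    rw [← Nat.card_eq_fintype_card, hU, ZMod.card] at h'
    rw [h, Nat.cast_sub h']
  have hC : Nat.card (CoprimePair q) =
      Nat.card (ZMod q × ZMod q) - Nat.card ({x : ZMod q // ¬ IsUnit x} × {x : ZMod q // ¬ IsUnit x}) ∧
      Nat.card ({x : ZMod q // ¬ IsUnit x} × {x : ZMod q // ¬ IsUnit x}) ≤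
        Nat.card (ZMod q × ZMod q) := by
    have e : {v : ZMod q × ZMod q // ¬ IsUnit v.1 ∧ ¬ IsUnit v.2} ≃
      ({x : ZMod q // ¬ IsUnit x} × {x : ZMod q // ¬ IsUnit x}) := 
        Equiv.subtypeProdEquivProd (p := fun x : ZMod q => ¬ IsUnit x) (q := fun x : ZMod q => ¬ IsUnit x)
    rw [← Nat.card_congr e]
    have e2 : CoprimePair q ≃ {v : ZMod q × ZMod q // ¬ (¬ IsUnit v.1 ∧ ¬ IsUnit v.2)} :=
      Equiv.subtypeEquivRight (fun v => by
        rw [aux_prime_pow_isCoprime p k hp hk]; tauto)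
    rw [Nat.card_congr e2]
    simp only [Nat.card_eq_fintype_card]
    exact ⟨Fintype.card_subtype_compl _, Fintype.card_subtype_le _⟩
  rw [hC.1, Nat.cast_sub hC.2, Nat.card_prod, Nat.card_prod, Nat.card_eq_fintype_card (α := ZMod q),
    ZMod.card]
  push_cast
  rw [hN]
  ring

lemma aux_card_coprimePair (q : ℕ) : 0 < q →
    (Nat.card (CoprimePair q) : ℝ) =
      q.totient * ((q : ℝ) * ∏ p ∈ q.primeFactors, (1 + (p : ℝ)⁻¹)) := by
  induction q using Nat.recOnPosPrimePosCoprime with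
  | prime_pow p n hp hn =>
    intro _
    rw [aux_card_prime_pow p n hp hn, Nat.primeFactors_prime_pow hn.ne' hp, Finset.prod_singleton,
      Nat.totient_prime_pow hp hn]
    have hp0 : (p : ℝ) ≠ 0 := by exact_mod_cast hp.ne_zero
    obtain ⟨m, rfl⟩ : ∃ m, n = m + 1 := ⟨n - 1, by omega⟩
    rw [Nat.cast_mul, Nat.cast_sub hp.one_le]
    push_cast
    try simp only [Nat.add_sub_cancel]
    field_simp
    ring
  | zero => intro h; exact absurd h (lt_irrefl _)
  | one =>
    intro _
    have : Nat.card (CoprimePair 1) = 1 := by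
      rw [Nat.card_eq_one_iff_unique]
      have : Subsingleton (ZMod 1) := inferInstanceAs (Subsingleton (Fin 1))
      refine ⟨⟨fun a b => Subtype.ext (Subsingleton.elim _ _)⟩,
        ⟨⟨(0, 0), ⟨0, 0, Subsingleton.elim _ _⟩⟩⟩⟩
    rw [this]
    simp
  | coprime a b ha hb hab iha ihb =>
    intro _
    rw [aux_card_coprime_mul a b hab, Nat.cast_mul, iha (by omega), ihb (by omega),
      Nat.totient_mul hab, hab.primeFactors_mul, Finset.prod_union hab.disjoint_primeFactors]
    push_cast
    ring

lemma aux_card (q : ℕ) (hq : 0 < q) :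
    (Nat.card (ProjLine q) : ℝ) = (q : ℝ) * ∏ p ∈ q.primeFactors, (1 + (p : ℝ)⁻¹) := by
  have h := aux_card_coprimePair q hq
  rw [aux_card_mul q hq, Nat.cast_mul, mul_comm] at h
  have : (q.totient : ℝ) ≠ 0 := by exact_mod_cast (Nat.totient_pos.2 hq).ne'
  exact mul_left_cancel₀ this h

lemma aux_piMap_eq (q₁ q₂ : ℕ) (g : Matrix.SpecialLinearGroup (Fin 2) ℤ) (v : CoprimePair q₁)
    (w : CoprimePair q₂) :
    piMap q₁ q₂ g = (Quotient.mk (projSetoid q₁) v, Quotient.mk (projSetoid q₂) w) ↔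
      (∃ u : (ZMod q₁)ˣ, ((g.1 0 0 : ℤ) : ZMod q₁) = u * v.1.1 ∧
        ((g.1 0 1 : ℤ) : ZMod q₁) = u * v.1.2) ∧
      (∃ u : (ZMod q₂)ˣ, ((g.1 1 0 : ℤ) : ZMod q₂) = u * w.1.1 ∧
        ((g.1 1 1 : ℤ) : ZMod q₂) = u * w.1.2) := by
  exact Prod.ext_iff.trans (and_congr Quotient.eq Quotient.eq)

lemma aux_piMap_eq' (q₁ q₂ : ℕ) (g h : Matrix.SpecialLinearGroup (Fin 2) ℤ) :
    piMap q₁ q₂ g = piMap q₁ q₂ h ↔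
      (∃ u : (ZMod q₁)ˣ, ((g.1 0 0 : ℤ) : ZMod q₁) = u * ((h.1 0 0 : ℤ) : ZMod q₁) ∧
        ((g.1 0 1 : ℤ) : ZMod q₁) = u * ((h.1 0 1 : ℤ) : ZMod q₁)) ∧
      (∃ u : (ZMod q₂)ˣ, ((g.1 1 0 : ℤ) : ZMod q₂) = u * ((h.1 1 0 : ℤ) : ZMod q₂) ∧
        ((g.1 1 1 : ℤ) : ZMod q₂) = u * ((h.1 1 1 : ℤ) : ZMod q₂)) := by
  rw [Prod.ext_iff]
  exact and_congr Quotient.eq Quotient.eq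

lemma aux_det (g : Matrix.SpecialLinearGroup (Fin 2) ℤ) :
    g.1 0 0 * g.1 1 1 - g.1 0 1 * g.1 1 0 = 1 := by
  have h := g.2; rwa [Matrix.det_fin_two] at h

lemma aux_det_cast (R : Type*) [CommRing R] (g : Matrix.SpecialLinearGroup (Fin 2) ℤ) :
    ((g.1 0 0 : ℤ) : R) * ((g.1 1 1 : ℤ) : R) - ((g.1 0 1 : ℤ) : R) * ((g.1 1 0 : ℤ) : R) = 1 := by
  exact_mod_cast congrArg (Int.cast : ℤ → R) (aux_det g)

lemma aux_inj (q₁ q₂ : ℕ) (g₁ g₂ : Matrix.SpecialLinearGroup (Fin 2) ℤ) :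
    piMap q₁ q₂ g₁ = piMap q₁ q₂ g₂ ↔
      ∃ γ : Matrix.SpecialLinearGroup (Fin 2) ℤ, InGamma2SL q₁ q₂ γ ∧ g₂ = γ * g₁ := by
  rw [aux_piMap_eq']
  constructor
  · rintro ⟨⟨u, h1, h2⟩, ⟨u', h3, h4⟩⟩
    refine ⟨g₂ * g₁⁻¹, ⟨?_, ?_⟩, by group⟩
    · rw [← ZMod.intCast_zmod_eq_zero_iff_dvd]
      simp only [Matrix.SpecialLinearGroup.coe_mul, Matrix.SpecialLinearGroup.coe_inv,
        Matrix.adjugate_fin_two, Matrix.mul_apply, Fin.sum_univ_two, Matrix.of_apply,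
        Matrix.cons_val', Matrix.cons_val_zero, Matrix.cons_val_one, Matrix.cons_val_fin_one]
      push_cast
      rw [h1, h2]; ring
    · rw [← ZMod.intCast_zmod_eq_zero_iff_dvd]
      simp only [Matrix.SpecialLinearGroup.coe_mul, Matrix.SpecialLinearGroup.coe_inv,
        Matrix.adjugate_fin_two, Matrix.mul_apply, Fin.sum_univ_two, Matrix.of_apply,
        Matrix.cons_val', Matrix.cons_val_zero, Matrix.cons_val_one, Matrix.cons_val_fin_one]
      push_cast
      rw [h3, h4]; ring
  · rintro ⟨γ, ⟨hb, hc⟩, rfl⟩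
    rw [← ZMod.intCast_zmod_eq_zero_iff_dvd] at hb hc
    have d1 := aux_det_cast (ZMod q₁) γ
    have d2 := aux_det_cast (ZMod q₂) γ
    rw [hb] at d1
    rw [hc] at d2
    refine ⟨⟨⟨((γ.1 1 1 : ℤ) : ZMod q₁), ((γ.1 0 0 : ℤ) : ZMod q₁), by linear_combination d1,
      by linear_combination d1⟩, ?_, ?_⟩, ⟨⟨((γ.1 0 0 : ℤ) : ZMod q₂), ((γ.1 1 1 : ℤ) : ZMod q₂),
      by linear_combination d2, by linear_combination d2⟩, ?_, ?_⟩⟩ <;>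
    simp only [Matrix.SpecialLinearGroup.coe_mul, Matrix.mul_apply, Fin.sum_univ_two] <;>
    push_cast
    · rw [hb]; linear_combination (-((g₁.1 0 0 : ℤ) : ZMod q₁)) * d1
    · rw [hb]; linear_combination (-((g₁.1 0 1 : ℤ) : ZMod q₁)) * d1
    · rw [hc]; linear_combination (-((g₁.1 1 0 : ℤ) : ZMod q₂)) * d2
    · rw [hc]; linear_combination (-((g₁.1 1 1 : ℤ) : ZMod q₂)) * d2

lemma aux_image (q₁ q₂ : ℕ) (hq₁ : 0 < q₁) (hq₂ : 0 < q₂) (v : CoprimePair q₁) (w : CoprimePair q₂)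
    (h : IsUnit (ZMod.castHom (Nat.gcd_dvd_left q₁ q₂) (ZMod (Nat.gcd q₁ q₂)) v.1.1 *
                    ZMod.castHom (Nat.gcd_dvd_right q₁ q₂) (ZMod (Nat.gcd q₁ q₂)) w.1.2 -
                  ZMod.castHom (Nat.gcd_dvd_left q₁ q₂) (ZMod (Nat.gcd q₁ q₂)) v.1.2 *
                    ZMod.castHom (Nat.gcd_dvd_right q₁ q₂) (ZMod (Nat.gcd q₁ q₂)) w.1.1)) :
    ∃ g, piMap q₁ q₂ g = (Quotient.mk (projSetoid q₁) v, Quotient.mk (projSetoid q₂) w) := by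
  obtain ⟨⟨a, b⟩, hv⟩ := v
  obtain ⟨⟨c, d⟩, hw⟩ := w
  obtain ⟨a, rfl⟩ := ZMod.intCast_surjective a
  obtain ⟨b, rfl⟩ := ZMod.intCast_surjective b
  obtain ⟨c, rfl⟩ := ZMod.intCast_surjective c
  obtain ⟨d, rfl⟩ := ZMod.intCast_surjective d
  simp only [map_intCast] at h
  have h' : IsUnit (((a * d - b * c : ℤ)) : ZMod (Nat.gcd q₁ q₂)) := by push_cast; exact h
  rw [ZMod.coe_int_isUnit_iff_isCoprime] at h'
  obtain ⟨A, B, C, D, x, hdet, hx, hA, hB, hC, hD⟩ := aux_core q₁ q₂ hq₁ hq₂ a b c d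
    (aux_lift_coprime _ _ _ hv) (aux_lift_coprime _ _ _ hw) h'.symm
  rw [← ZMod.coe_int_isUnit_iff_isCoprime] at hx
  obtain ⟨u, hu⟩ := hx
  rw [← ZMod.intCast_zmod_eq_zero_iff_dvd] at hA hB hC hD
  push_cast at hA hB hC hD
  refine ⟨⟨!![A, B; C, D], by rw [Matrix.det_fin_two_of]; exact hdet⟩, ?_⟩
  refine (aux_piMap_eq q₁ q₂ _ _ _).2 ?_
  refine ⟨⟨u, ?_, ?_⟩, ⟨1, ?_, ?_⟩⟩ <;> simp <;> (try rw [hu])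
  · linear_combination hA
  · linear_combination hB
  · linear_combination hC
  · linear_combination hD

/-- the projective-line parametrization of `Γ₂(q₁,q₂)\SL₂(ℤ)`. -/
theorem projective_line_parametrization (q₁ q₂ : ℕ) (hq₁ : 0 < q₁) (hq₂ : 0 < q₂) :
    -- cardinality of `ℙ¹_q`
    (∀ q : ℕ, 0 < q →
      (Nat.card (ProjLine q) : ℝ) = (q : ℝ) * ∏ p ∈ q.primeFactors, (1 + (p : ℝ)⁻¹)) ∧
    -- (i) invariance under `Γ₂(q₁,q₂)` and injectivity on cosets
    (∀ γ : Matrix.SpecialLinearGroup (Fin 2) ℤ, InGamma2SL q₁ q₂ γ →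
      ∀ g, piMap q₁ q₂ (γ * g) = piMap q₁ q₂ g) ∧
    (∀ g₁ g₂ : Matrix.SpecialLinearGroup (Fin 2) ℤ,
      piMap q₁ q₂ g₁ = piMap q₁ q₂ g₂ ↔
        ∃ γ : Matrix.SpecialLinearGroup (Fin 2) ℤ, InGamma2SL q₁ q₂ γ ∧ g₂ = γ * g₁) ∧
    -- (ii) characterization of the image by `gcd(ad − bc, q₀) = 1`
    (Set.range (piMap q₁ q₂) =
      {x : ProjLine q₁ × ProjLine q₂ |
        ∃ (v : CoprimePair q₁) (w : CoprimePair q₂),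
          x = (Quotient.mk (projSetoid q₁) v, Quotient.mk (projSetoid q₂) w) ∧
          IsUnit (ZMod.castHom (Nat.gcd_dvd_left q₁ q₂) (ZMod (Nat.gcd q₁ q₂)) v.1.1 *
                    ZMod.castHom (Nat.gcd_dvd_right q₁ q₂) (ZMod (Nat.gcd q₁ q₂)) w.1.2 -
                  ZMod.castHom (Nat.gcd_dvd_left q₁ q₂) (ZMod (Nat.gcd q₁ q₂)) v.1.2 *
                    ZMod.castHom (Nat.gcd_dvd_right q₁ q₂) (ZMod (Nat.gcd q₁ q₂)) w.1.1)}) ∧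
    -- (iii) surjectivity iff `gcd(q₁,q₂) = 1`
    (Function.Surjective (piMap q₁ q₂) ↔ Nat.gcd q₁ q₂ = 1) := by
  refine ⟨aux_card, ?_, aux_inj q₁ q₂, ?_, ?_, ?_⟩
  · intro γ hγ g
    exact ((aux_inj q₁ q₂ _ _).2 ⟨γ, hγ, rfl⟩).symm
  · ext x
    constructor
    · rintro ⟨g, rfl⟩
      refine ⟨_, _, rfl, ?_⟩
      simp only [map_intCast]
      rw [aux_det_cast]
      exact isUnit_one
    · rintro ⟨v, w, rfl, h⟩
      exact aux_image q₁ q₂ hq₁ hq₂ v w h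
  · intro hs
    obtain ⟨g, hg⟩ := hs (Quotient.mk (projSetoid q₁) ⟨(1, 0), isCoprime_one_left⟩,
      Quotient.mk (projSetoid q₂) ⟨(1, 0), isCoprime_one_left⟩)
    obtain ⟨⟨u, -, h1⟩, ⟨u', -, h2⟩⟩ := (aux_piMap_eq q₁ q₂ _ _ _).1 hg
    simp only [mul_zero] at h1 h2
    rw [ZMod.intCast_zmod_eq_zero_iff_dvd] at h1 h2
    have e1 : ((Nat.gcd q₁ q₂ : ℕ) : ℤ) ∣ q₁ := by exact_mod_cast Nat.gcd_dvd_left _ _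
    have e2 : ((Nat.gcd q₁ q₂ : ℕ) : ℤ) ∣ q₂ := by exact_mod_cast Nat.gcd_dvd_right _ _
    have h3 : ((Nat.gcd q₁ q₂ : ℕ) : ℤ) ∣ 1 := by
      rw [← aux_det g]
      exact dvd_sub ((e2.trans h2).mul_left _) ((e1.trans h1).mul_right _)
    exact Nat.dvd_one.1 (by exact_mod_cast h3)
  · rintro h ⟨x, y⟩
    induction x using Quotient.inductionOn with | _ v => ?_
    induction y using Quotient.inductionOn with | _ w => ?_
    refine aux_image q₁ q₂ hq₁ hq₂ v w ?_
    have : Subsingleton (ZMod (Nat.gcd q₁ q₂)) := by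
      rw [h]; exact inferInstanceAs (Subsingleton (Fin 1))
    exact isUnit_of_subsingleton _
end

section
/- Let q₁, q₂ be positive integers, q = q₁q₂, Γ = Γ₂(q₁,q₂), and let T be a complete set of representatives of Γ\SL₂(ℤ). Let h, k be positive integers with gcd(h, kq) = 1. Let T_h^{(q₁)} = { (a, b q₁; 0, d) : a, d ∈ ℤ_{>0}, ad = h, 0 ≤ b < d }, let M_{2,h,k}(ℤ) = { (a,b;c,d) ∈ M₂(ℤ) : ad − bc = hk, gcd(a,c,k) = 1, gcd(b,d,k) = 1 }, and let T_{1,k} be a complete set of representatives of SL₂(ℤ)\M_{2,1,k}(ℤ). Then (as sets of matrix products) M_{2,h,k}(ℤ) = Γ · T · T_h^{(q₁)} · T_{1,k} = Γ · T_h^{(q₁)} · T · T_{1,k}; moreover Γ · T · T_h^{(q₁)} = Γ · T_h^{(q₁)} · T. -/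
open scoped Pointwise

/-- `Γ₂(q₁,q₂)` as a set of integer matrices: determinant one, `q₁ ∣ b`, `q₂ ∣ c`. -/
def Gamma2Set (q₁ q₂ : ℕ) : Set (Matrix (Fin 2) (Fin 2) ℤ) :=
  {γ | γ.det = 1 ∧ (q₁ : ℤ) ∣ γ 0 1 ∧ (q₂ : ℤ) ∣ γ 1 0}

/-- `M_{2,h,k}(ℤ)`: integer matrices with `ad − bc = hk`, `gcd(a,c,k) = 1`, `gcd(b,d,k) = 1`. -/
def M2hk (h k : ℤ) : Set (Matrix (Fin 2) (Fin 2) ℤ) :=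
  {m | m.det = h * k ∧ Nat.gcd (Int.gcd (m 0 0) (m 1 0)) k.natAbs = 1 ∧
        Nat.gcd (Int.gcd (m 0 1) (m 1 1)) k.natAbs = 1}

/-- The Hecke set `T_h^{(q₁)} = {(a, b q₁; 0, d) : a,d > 0, ad = h, 0 ≤ b < d}`. -/
def HeckeSet (q₁ : ℕ) (h : ℤ) : Set (Matrix (Fin 2) (Fin 2) ℤ) :=
  {m | ∃ a d b : ℤ, 0 < a ∧ 0 < d ∧ a * d = h ∧ 0 ≤ b ∧ b < d ∧
        m = !![a, b * (q₁ : ℤ); 0, d]}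

lemma aux_ext {a b c d a' b' c' d' : ℤ} (h1 : a = a') (h2 : b = b') (h3 : c = c')
    (h4 : d = d') : !![a, b; c, d] = !![a', b'; c', d'] := by
  rw [h1, h2, h3, h4]

lemma aux_gcd (a b : ℤ) (hab : a ≠ 0 ∨ b ≠ 0) :
    ∃ g a' b' x y : ℤ, 0 < g ∧ a = g * a' ∧ b = g * b' ∧ a' * x + b' * y = 1 := by
  have hg : 0 < (Int.gcd a b : ℤ) := by
    have : 0 < Int.gcd a b := Int.gcd_pos_iff.mpr hab
    exact_mod_cast this
  obtain ⟨a', ha⟩ := Int.gcd_dvd_left a b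
  obtain ⟨b', hb⟩ := Int.gcd_dvd_right a b
  refine ⟨Int.gcd a b, a', b', Int.gcdA a b, Int.gcdB a b, hg, ha, hb, ?_⟩
  have h1 := Int.gcd_eq_gcd_ab a b
  generalize Int.gcdA a b = x at *
  generalize Int.gcdB a b = y at *
  generalize (Int.gcd a b : ℤ) = g at *
  apply mul_left_cancel₀ hg.ne'
  subst ha
  rw [hb] at h1
  linear_combination -h1

lemma aux_cop3 (a c k : ℤ) :
    Nat.gcd (Int.gcd a c) k.natAbs = 1 ↔ ∃ x y z : ℤ, a * x + c * y + k * z = 1 := by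
  have e : Nat.gcd (Int.gcd a c) k.natAbs = Int.gcd (Int.gcd a c : ℤ) k := rfl
  rw [e]
  constructor
  · intro h
    have h1 := Int.gcd_eq_gcd_ab (Int.gcd a c : ℤ) k
    rw [h] at h1
    have h2 := Int.gcd_eq_gcd_ab a c
    generalize Int.gcdA (Int.gcd a c : ℤ) k = u at *
    refine ⟨Int.gcdA a c * u, Int.gcdB a c * u, Int.gcdB (Int.gcd a c : ℤ) k, ?_⟩
    push_cast at h1
    linear_combination -h1 - u * h2
  · rintro ⟨x, y, z, h⟩
    rw [← Int.isCoprime_iff_gcd_eq_one]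
    obtain ⟨a', ha⟩ := Int.gcd_dvd_left a c
    obtain ⟨c', hc⟩ := Int.gcd_dvd_right a c
    refine ⟨a' * x + c' * y, z, ?_⟩
    linear_combination h - x * ha - y * hc

/-- Right multiplication to lower triangular form, with lower left entry divisible by `r`. -/
lemma aux_right (m : Matrix (Fin 2) (Fin 2) ℤ) (h r : ℤ) (hh : h ≠ 0) (hm : m.det = h)
    (hr : IsCoprime h r) :
    ∃ p s : Matrix (Fin 2) (Fin 2) ℤ, p.det = 1 ∧ s.det = h ∧ s 0 1 = 0 ∧ r ∣ s 1 0 ∧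
      m = s * p := by
  obtain ⟨a, b, c, d, rfl⟩ : ∃ a b c d, m = !![a, b; c, d] := ⟨_, _, _, _, Matrix.eta_fin_two m⟩
  rw [Matrix.det_fin_two_of] at hm
  have hab : a ≠ 0 ∨ b ≠ 0 := by
    by_contra hc
    push Not at hc
    apply hh
    rw [← hm, hc.1, hc.2]; ring
  obtain ⟨g, a', b', x, y, hg, rfl, rfl, hxy⟩ := aux_gcd a b hab
  obtain ⟨u, v, huv⟩ := hr
  obtain ⟨e, he⟩ : ∃ e, e = a' * d - b' * c := ⟨_, rfl⟩
  have hge : g * e = h := by rw [he, ← hm]; ring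
  obtain ⟨w, hw⟩ : ∃ w, w = c * x + d * y := ⟨_, rfl⟩
  refine ⟨!![a', b'; -(y - u * g * w * a'), x + u * g * w * b'], !![g, 0; r * (v * w), e],
    ?_, ?_, rfl, ⟨v * w, rfl⟩, ?_⟩
  · rw [Matrix.det_fin_two_of]; linear_combination hxy
  · rw [Matrix.det_fin_two_of]; linear_combination hge
  · rw [Matrix.mul_fin_two]
    have hk : r * (v * w) = w - u * g * w * e := by
      linear_combination w * huv + w * u * hge
    rw [hk]
    apply aux_ext
    · ring
    · ring
    · subst hw; subst he; linear_combination -c * hxy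
    · subst hw; subst he; linear_combination -d * hxy

lemma aux_left (m : Matrix (Fin 2) (Fin 2) ℤ) (h r : ℤ) (hh : h ≠ 0) (hm : m.det = h)
    (hr : IsCoprime h r) :
    ∃ p s : Matrix (Fin 2) (Fin 2) ℤ, p.det = 1 ∧ s.det = h ∧ s 1 0 = 0 ∧ r ∣ s 0 1 ∧
      m = p * s := by
  obtain ⟨p, s, hp, hs, h1, h2, h3⟩ := aux_right m.transpose h r hh (by simpa using hm) hr
  refine ⟨p.transpose, s.transpose, by simpa using hp, by simpa using hs, h1, h2, ?_⟩
  rw [← Matrix.transpose_mul, ← h3, Matrix.transpose_transpose]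

lemma aux_gamma_hecke (q₁ q₂ : ℕ) (h : ℤ) (hh : 0 < h) (h1 : IsCoprime h (q₁ : ℤ))
    (h2 : IsCoprime h (q₂ : ℤ)) (m : Matrix (Fin 2) (Fin 2) ℤ) (hm : m.det = h)
    (hb : (q₁ : ℤ) ∣ m 0 1) (hc : (q₂ : ℤ) ∣ m 1 0) :
    m ∈ Gamma2Set q₁ q₂ * HeckeSet q₁ h := by
  obtain ⟨a, b, c, d, rfl⟩ : ∃ a b c d, m = !![a, b; c, d] := ⟨_, _, _, _, Matrix.eta_fin_two m⟩
  rw [Matrix.det_fin_two_of] at hm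
  change (q₁ : ℤ) ∣ b at hb
  change (q₂ : ℤ) ∣ c at hc
  have hac : a ≠ 0 ∨ c ≠ 0 := by
    by_contra hc
    push Not at hc
    apply hh.ne'
    rw [← hm, hc.1, hc.2]; ring
  obtain ⟨g, a', c', x, y, hg, rfl, rfl, hxy⟩ := aux_gcd a c hac
  obtain ⟨e, he⟩ : ∃ e, e = a' * d - c' * b := ⟨_, rfl⟩
  have hge : g * e = h := by rw [he, ← hm]; ring
  have hc' : (q₂ : ℤ) ∣ c' := by
    have : IsCoprime g (q₂ : ℤ) := by rw [← hge] at h2; exact h2.of_mul_left_left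
    exact this.symm.dvd_of_dvd_mul_left hc
  obtain ⟨b', rfl⟩ := hb
  have ha1 : IsCoprime a' (q₁ : ℤ) := by
    obtain ⟨u, v, huv⟩ := h1
    exact ⟨u * g * d, v - u * b' * g * c', by linear_combination huv + u * hm⟩
  have hac' : IsCoprime a' ((q₁ : ℤ) * c') :=
    ha1.mul_right ⟨x, y, by linear_combination hxy⟩
  obtain ⟨X, Y, hXY⟩ := hac'
  have hepos : 0 < e := by
    rw [← hge] at hh
    exact pos_of_mul_pos_right hh hg.le
  obtain ⟨B, hB⟩ : ∃ B, B = X * b' + Y * d := ⟨_, rfl⟩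
  have hdiv := Int.emod_add_mul_ediv B e
  refine ⟨!![a', a' * q₁ * (B / e) - q₁ * Y; c', c' * q₁ * (B / e) + X], ⟨?_, ?_, hc'⟩,
    !![g, (B % e) * q₁; 0, e], ⟨g, e, B % e, hg, hepos, hge, Int.emod_nonneg _ hepos.ne',
      Int.emod_lt_of_pos _ hepos, rfl⟩, ?_⟩
  · rw [Matrix.det_fin_two_of]; linear_combination hXY
  · exact ⟨a' * (B / e) - Y, by simp; ring⟩
  · change _ * _ = _
    rw [Matrix.mul_fin_two]
    have : B % e = B - e * (B / e) := by linear_combination hdiv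
    rw [this]
    apply aux_ext
    · ring
    · subst hB; subst he; linear_combination q₁ * b' * hXY
    · ring
    · subst hB; subst he; linear_combination d * hXY

lemma aux_main {q₁ q₂ : ℕ} {h k : ℤ} {T T1k : Set (Matrix (Fin 2) (Fin 2) ℤ)} (hh : 0 < h)
    (hk : 0 < k) (hhk : IsCoprime h k)
    (hT1k : T1k ⊆ M2hk 1 k)
    (hT1krep : ∀ m ∈ M2hk 1 k,
      ∃! σ, σ ∈ T1k ∧ ∃ γ : Matrix (Fin 2) (Fin 2) ℤ, γ.det = 1 ∧ m = γ * σ) :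
    M2hk h k = {m : Matrix (Fin 2) (Fin 2) ℤ | m.det = h} * T1k := by
  ext m
  constructor
  · rintro ⟨hm, hg1, hg2⟩
    obtain ⟨p, s, hp, hs, hs10, -, rfl⟩ := aux_left m (h * k) 1 (mul_pos hh hk).ne' hm
      isCoprime_one_right
    obtain ⟨a, b, c, d, rfl⟩ : ∃ a b c d, s = !![a, b; c, d] :=
      ⟨_, _, _, _, Matrix.eta_fin_two s⟩
    change c = 0 at hs10
    subst hs10
    obtain ⟨p₁, p₂, p₃, p₄, rfl⟩ : ∃ a b c d, p = !![a, b; c, d] :=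
      ⟨_, _, _, _, Matrix.eta_fin_two p⟩
    rw [Matrix.mul_fin_two, aux_cop3] at hg1 hg2
    simp only [Matrix.of_apply, Matrix.cons_val', Matrix.cons_val_zero, Matrix.cons_val_one,
      Matrix.cons_val_fin_one] at hg1 hg2
    obtain ⟨x, y, z, hxyz⟩ := hg1
    obtain ⟨x', y', z', hxyz'⟩ := hg2
    rw [Matrix.det_fin_two_of] at hs
    have hak : IsCoprime a k := ⟨p₁ * x + p₃ * y, z, by linear_combination hxyz⟩
    have hah : a ∣ h := hak.dvd_of_dvd_mul_right ⟨d, by linear_combination -hs⟩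
    obtain ⟨e, he⟩ := hah
    have ha0 : a ≠ 0 := by rintro rfl; simp at he; omega
    have hd : d = e * k := by
      apply mul_left_cancel₀ ha0
      rw [he] at hs; linear_combination hs
    subst hd
    obtain ⟨u, v, huv⟩ := hak
    have hσ : !![1, u * b; 0, k] ∈ M2hk 1 k := by
      refine ⟨by rw [Matrix.det_fin_two_of]; ring, ?_, ?_⟩
      · rw [aux_cop3]; exact ⟨1, 0, 0, by simp⟩
      · rw [aux_cop3]
        refine ⟨a * (p₁ * x' + p₃ * y'), 0, v * b * (p₁ * x' + p₃ * y')
          + (p₂ * e * x' + p₄ * e * y') + z', ?_⟩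
        simp only [Matrix.of_apply, Matrix.cons_val', Matrix.cons_val_zero, Matrix.cons_val_one,
          Matrix.cons_val_fin_one]
        linear_combination hxyz' + b * (p₁ * x' + p₃ * y') * huv
    obtain ⟨σ, ⟨hσT, γ, hγ, hγσ⟩, -⟩ := hT1krep _ hσ
    refine ⟨!![p₁, p₂; p₃, p₄] * !![a, v * b; 0, e] * γ, ?_, σ, hσT, ?_⟩
    · change Matrix.det _ = h
      rw [Matrix.det_mul, Matrix.det_mul, hp, hγ, Matrix.det_fin_two_of]
      linear_combination -he
    · change _ * _ = _
      rw [Matrix.mul_assoc _ γ, ← hγσ, Matrix.mul_assoc]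
      congr 1
      rw [Matrix.mul_fin_two]
      apply aux_ext
      · ring
      · linear_combination b * huv
      · ring
      · ring
  · rintro ⟨n, hn, σ, hσ, rfl⟩
    change n.det = h at hn
    obtain ⟨hd, hg1, hg2⟩ := hT1k hσ
    change n * σ ∈ _
    refine ⟨by rw [Matrix.det_mul, hn, hd]; ring, ?_, ?_⟩
    all_goals
      rw [Matrix.det_fin_two] at hn
      rw [aux_cop3] at hg1 hg2 ⊢
      obtain ⟨u, v, huv⟩ := hhk
      simp only [Matrix.mul_apply, Fin.sum_univ_two]
    · obtain ⟨x, y, z, h⟩ := hg1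
      refine ⟨u * (x * n 1 1 - y * n 1 0), u * (y * n 0 0 - x * n 0 1),
        v + u * (n 0 0 * n 1 1 - n 0 1 * n 1 0) * z, ?_⟩
      rw [← hn] at huv
      linear_combination huv + u * (n 0 0 * n 1 1 - n 0 1 * n 1 0) * h
    · obtain ⟨x, y, z, h⟩ := hg2
      refine ⟨u * (x * n 1 1 - y * n 1 0), u * (y * n 0 0 - x * n 0 1),
        v + u * (n 0 0 * n 1 1 - n 0 1 * n 1 0) * z, ?_⟩
      rw [← hn] at huv
      linear_combination huv + u * (n 0 0 * n 1 1 - n 0 1 * n 1 0) * h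

/-- equation (12.2): factorisation of `M_{2,h,k}(ℤ)`.  With `Γ = Γ₂(q₁,q₂)`,
`T` a complete set of representatives of `Γ\SL₂(ℤ)` and `T_{1,k}` one of
`SL₂(ℤ)\M_{2,1,k}(ℤ)`, and `gcd(h, kq) = 1`:
`M_{2,h,k}(ℤ) = Γ·T·T_h^{(q₁)}·T_{1,k} = Γ·T_h^{(q₁)}·T·T_{1,k}`, and
`Γ·T·T_h^{(q₁)} = Γ·T_h^{(q₁)}·T`. -/
theorem M2hk_factorization (q₁ q₂ : ℕ) (hq₁ : 0 < q₁) (hq₂ : 0 < q₂)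
    (h k : ℤ) (hh : 0 < h) (hk : 0 < k)
    (hcop : Int.gcd h (k * (q₁ * q₂ : ℕ)) = 1)
    (T : Set (Matrix (Fin 2) (Fin 2) ℤ))
    (hTdet : ∀ τ ∈ T, τ.det = 1)
    (hTrep : ∀ g : Matrix (Fin 2) (Fin 2) ℤ, g.det = 1 →
      ∃! τ, τ ∈ T ∧ ∃ γ ∈ Gamma2Set q₁ q₂, g = γ * τ)
    (T1k : Set (Matrix (Fin 2) (Fin 2) ℤ))
    (hT1k : T1k ⊆ M2hk 1 k)
    (hT1krep : ∀ m ∈ M2hk 1 k,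
      ∃! σ, σ ∈ T1k ∧ ∃ γ : Matrix (Fin 2) (Fin 2) ℤ, γ.det = 1 ∧ m = γ * σ) :
    M2hk h k = Gamma2Set q₁ q₂ * T * HeckeSet q₁ h * T1k ∧
    M2hk h k = Gamma2Set q₁ q₂ * HeckeSet q₁ h * T * T1k ∧
    Gamma2Set q₁ q₂ * T * HeckeSet q₁ h = Gamma2Set q₁ q₂ * HeckeSet q₁ h * T := by
  have hc : IsCoprime h (k * (q₁ * q₂ : ℕ)) := Int.isCoprime_iff_gcd_eq_one.mpr hcop
  have hck : IsCoprime h k := hc.of_mul_right_left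
  have hcq := hc.of_mul_right_right
  push_cast at hcq
  have hc1 : IsCoprime h (q₁ : ℤ) := hcq.of_mul_right_left
  have hc2 : IsCoprime h (q₂ : ℤ) := hcq.of_mul_right_right
  have hheck : ∀ t ∈ HeckeSet q₁ h, t.det = h := by
    rintro t ⟨a, d, b, -, -, had, -, -, rfl⟩
    rw [Matrix.det_fin_two_of]; linear_combination had
  have hmain := aux_main (q₁ := q₁) (q₂ := q₂) (T := T) hh hk hck hT1k hT1krep
  have E1 : Gamma2Set q₁ q₂ * T * HeckeSet q₁ h = {m | m.det = h} := by
    ext m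
    constructor
    · rintro ⟨_, ⟨γ, hγ, τ, hτ, rfl⟩, t, ht, rfl⟩
      change Matrix.det (γ * τ * t) = h
      rw [Matrix.det_mul, Matrix.det_mul, hγ.1, hTdet τ hτ, hheck t ht]; ring
    · intro hm
      obtain ⟨p, s, hp, hs, -, hs01, rfl⟩ := aux_left m h q₁ hh.ne' hm hc1
      obtain ⟨γ, hγ, t, ht, rfl⟩ := aux_gamma_hecke q₁ 1 h hh hc1
        (by simpa using isCoprime_one_right) s hs hs01 (by simp)
      obtain ⟨τ, ⟨hτ, γ', hγ', hpτ⟩, -⟩ := hTrep (p * γ) (by rw [Matrix.det_mul, hp, hγ.1, one_mul])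
      refine ⟨γ' * τ, ⟨γ', hγ', τ, hτ, rfl⟩, t, ht, ?_⟩
      change γ' * τ * t = p * (γ * t)
      rw [← hpτ, Matrix.mul_assoc]
  have E2 : Gamma2Set q₁ q₂ * HeckeSet q₁ h * T = {m | m.det = h} := by
    ext m
    constructor
    · rintro ⟨_, ⟨γ, hγ, t, ht, rfl⟩, τ, hτ, rfl⟩
      change Matrix.det (γ * t * τ) = h
      rw [Matrix.det_mul, Matrix.det_mul, hγ.1, hTdet τ hτ, hheck t ht]; ring
    · intro hm
      obtain ⟨p, s, hp, hs, hs01, hs10, rfl⟩ := aux_right m h q₂ hh.ne' hm hc2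
      obtain ⟨τ, ⟨hτ, γ, hγ, rfl⟩, -⟩ := hTrep p hp
      refine ⟨s * γ, ?_, τ, hτ, Matrix.mul_assoc _ _ _⟩
      apply aux_gamma_hecke q₁ q₂ h hh hc1 hc2
      · rw [Matrix.det_mul, hs, hγ.1, mul_one]
      · rw [Matrix.mul_apply, Fin.sum_univ_two, hs01, zero_mul, add_zero]
        exact hγ.2.1.mul_left _
      · rw [Matrix.mul_apply, Fin.sum_univ_two]
        exact dvd_add (hs10.mul_right _) (hγ.2.2.mul_left _)
  rw [E1, E2]
  exact ⟨hmain, hmain, rfl⟩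
end

section
/- There is an absolute constant c > 0 such that for all K > 1 and all real t, x, φ, ρ, ϑ with a[e^t]·n[x] = k[φ]·a[e^{−ρ}]·k[ϑ] in SL₂(ℝ): if |ρ| ≤ 1/K then |t| ≤ c/K and |x| ≤ c/K; and conversely, if |t| ≤ 1/K and |x| ≤ 1/K then |ρ| ≤ c/K. -/
open Real

/-- `n[x] = (1, x; 0, 1)`. -/
noncomputable def nMat (x : ℝ) : Matrix (Fin 2) (Fin 2) ℝ := !![1, x; 0, 1]

/-- `a[y] = diag(√y, 1/√y)`. -/
noncomputable def aMat (y : ℝ) : Matrix (Fin 2) (Fin 2) ℝ :=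
  !![Real.sqrt y, 0; 0, (Real.sqrt y)⁻¹]

/-- `k[θ] = (cos θ, sin θ; −sin θ, cos θ)`. -/
noncomputable def kMat (θ : ℝ) : Matrix (Fin 2) (Fin 2) ℝ :=
  !![Real.cos θ, Real.sin θ; -Real.sin θ, Real.cos θ]

lemma cosh_upper_aux {u : ℝ} (hu : |u| ≤ 1) : Real.exp u + Real.exp (-u) ≤ 2 + 2 * u ^ 2 := by
  have h1 := (abs_le.mp (Real.abs_exp_sub_one_sub_id_le hu)).2
  have h2 := (abs_le.mp (Real.abs_exp_sub_one_sub_id_le (x := -u) (by rwa [abs_neg]))).2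
  nlinarith

lemma cosh_lower_aux (u : ℝ) : 2 + u ^ 2 / 2 ≤ Real.exp u + Real.exp (-u) := by
  rcases le_total 0 u with h | h
  · have h1 := Real.quadratic_le_exp_of_nonneg h
    have h2 := Real.add_one_le_exp (-u)
    linarith
  · have h1 := Real.quadratic_le_exp_of_nonneg (x := -u) (by linarith)
    have h2 := Real.add_one_le_exp u
    nlinarith

lemma frobenius_aux (t x φ ρ ϑ : ℝ)
    (h : aMat (Real.exp t) * nMat x = kMat φ * aMat (Real.exp (-ρ)) * kMat ϑ) :
    Real.exp t + Real.exp (-t) + Real.exp t * x ^ 2 = Real.exp ρ + Real.exp (-ρ) := by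
  have e00 := congrFun (congrFun h 0) 0
  have e01 := congrFun (congrFun h 0) 1
  have e10 := congrFun (congrFun h 1) 0
  have e11 := congrFun (congrFun h 1) 1
  simp [aMat, nMat, kMat, Matrix.mul_apply, Fin.sum_univ_two] at e00 e01 e10 e11
  have a1 : √(Real.exp t) ^ 2 = Real.exp t := Real.sq_sqrt (Real.exp_pos _).le
  have a2 : (√(Real.exp t))⁻¹ ^ 2 = Real.exp (-t) := by rw [inv_pow, a1, Real.exp_neg]
  have b1 : √(Real.exp (-ρ)) ^ 2 = Real.exp (-ρ) := Real.sq_sqrt (Real.exp_pos _).le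
  have b2 : (√(Real.exp (-ρ)))⁻¹ ^ 2 = Real.exp ρ := by
    rw [inv_pow, b1, Real.exp_neg, inv_inv]
  have c1 := Real.sin_sq_add_cos_sq φ
  have c2 := Real.sin_sq_add_cos_sq ϑ
  rw [← a1, ← a2, ← b1, ← b2]
  generalize (√(Real.exp t))⁻¹ = a' at *
  generalize √(Real.exp t) = a at *
  generalize (√(Real.exp (-ρ)))⁻¹ = b' at *
  generalize √(Real.exp (-ρ)) = b at *
  generalize Real.sin φ = q at *
  generalize Real.cos φ = p at *
  generalize Real.sin ϑ = s at *
  generalize Real.cos ϑ = r at *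
  have key : a ^ 2 + a' ^ 2 + a ^ 2 * x ^ 2
      = (q ^ 2 + p ^ 2) * (s ^ 2 + r ^ 2) * (b' ^ 2 + b ^ 2) := by
    have : a ^ 2 + a' ^ 2 + a ^ 2 * x ^ 2 = a ^ 2 + (a * x) ^ 2 + 0 ^ 2 + a' ^ 2 := by ring
    rw [this]
    conv_lhs => rw [e01, e11]
    conv_lhs => rw [e00]
    have e10' : (0 : ℝ) ^ 2 = (-(q * b * r) - p * b' * s) ^ 2 := by
      have : -(q * b * r) - p * b' * s = 0 := by linarith
      rw [this]
    rw [e10']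
    ring
  rw [key, c1, c2]
  ring

/-- There is an absolute constant `c > 0` such that for all `K > 1` and all
real `t, x, φ, ρ, ϑ` with `a[e^t]·n[x] = k[φ]·a[e^{−ρ}]·k[ϑ]`: if `|ρ| ≤ 1/K` then `|t| ≤ c/K`
and `|x| ≤ c/K`; conversely, if `|t| ≤ 1/K` and `|x| ≤ 1/K` then `|ρ| ≤ c/K`. -/
theorem iwasawa_cartan_size_comparison :
    ∃ c : ℝ, 0 < c ∧
      ∀ K t x φ ρ ϑ : ℝ, 1 < K →
        aMat (Real.exp t) * nMat x = kMat φ * aMat (Real.exp (-ρ)) * kMat ϑ →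
        ((|ρ| ≤ 1 / K → |t| ≤ c / K ∧ |x| ≤ c / K) ∧
          (|t| ≤ 1 / K → |x| ≤ 1 / K → |ρ| ≤ c / K)) := by
  refine ⟨4, by norm_num, ?_⟩
  intro K t x φ ρ ϑ hK h
  have F := frobenius_aux t x φ ρ ϑ h
  have hK0 : 0 < K := by linarith
  have hk1 : 1 / K ≤ 1 := by rw [div_le_one hK0]; exact hK.le
  have hk0 : 0 < 1 / K := by positivity
  have h4 : 4 / K = 4 * (1 / K) := by ring
  rw [h4]
  generalize 1 / K = k at *
  have hp := Real.exp_pos t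
  refine ⟨fun hρ => ?_, fun ht hx => ?_⟩
  · have hc : Real.cosh t ≤ Real.cosh ρ := by
      rw [Real.cosh_eq, Real.cosh_eq]
      have : 0 ≤ Real.exp t * x ^ 2 := by positivity
      linarith
    have htρ := Real.cosh_le_cosh.mp hc
    refine ⟨by linarith, ?_⟩
    have U := cosh_upper_aux (hρ.trans hk1)
    have L := cosh_lower_aux t
    have h3 : 1 / 3 ≤ Real.exp t := by
      have h5 : Real.exp (-1) ≤ Real.exp t :=
        Real.exp_le_exp.mpr (by linarith [(abs_le.mp (htρ.trans (hρ.trans hk1))).1])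
      have h6 : 1 / 3 ≤ Real.exp (-1) := by
        rw [Real.exp_neg, one_div]
        exact inv_anti₀ (Real.exp_pos _) (by linarith [Real.exp_one_lt_d9])
      linarith
    have hρ2 : ρ ^ 2 ≤ k ^ 2 := sq_le_sq' (by linarith [(abs_le.mp hρ).1]) (abs_le.mp hρ).2
    have h7 : 1 / 3 * x ^ 2 ≤ Real.exp t * x ^ 2 :=
      mul_le_mul_of_nonneg_right h3 (sq_nonneg x)
    apply abs_le_of_sq_le_sq _ (by linarith)
    nlinarith [sq_nonneg t, sq_nonneg k]
  · have U := cosh_upper_aux (ht.trans hk1)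
    have L := cosh_lower_aux ρ
    have h3 : Real.exp t ≤ 3 := by
      have h5 : Real.exp t ≤ Real.exp 1 :=
        Real.exp_le_exp.mpr (by linarith [(abs_le.mp (ht.trans hk1)).2])
      linarith [Real.exp_one_lt_d9]
    have ht2 : t ^ 2 ≤ k ^ 2 := sq_le_sq' (by linarith [(abs_le.mp ht).1]) (abs_le.mp ht).2
    have hx2 : x ^ 2 ≤ k ^ 2 := sq_le_sq' (by linarith [(abs_le.mp hx).1]) (abs_le.mp hx).2
    have h7 : Real.exp t * x ^ 2 ≤ 3 * x ^ 2 :=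
      mul_le_mul_of_nonneg_right h3 (sq_nonneg x)
    apply abs_le_of_sq_le_sq _ (by linarith)
    nlinarith [sq_nonneg k]
end

section
/- For real α > 0 and a natural number n, define the generalized Laguerre polynomial L_n^{(α)}(x) = (x^{−α} e^{x} / n!) · (d/dx)^n ( e^{−x} x^{n+α} ) for x > 0. Then ∫₀^∞ x^{α−1} e^{−x} L_n^{(α)}(x)² dx = Σ_{i=0}^{n} Γ(i+α)/Γ(i+1); in particular, if α ≥ 1 then this integral is at most (n+1) · Γ(n+α)/Γ(n+1). -/
open Real MeasureTheory

/-- The generalized Laguerre polynomial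
`L_n^{(α)}(x) = (x^{−α} e^{x} / n!) · (d/dx)^n ( e^{−x} x^{n+α} )`. -/
noncomputable def laguerre (α : ℝ) (n : ℕ) (x : ℝ) : ℝ :=
  x ^ (-α) * Real.exp x / (n.factorial : ℝ) *
    iteratedDeriv n (fun y : ℝ => Real.exp (-y) * y ^ ((n : ℝ) + α)) x

open Polynomial in
/-- integrability of polynomials against the Gamma weight -/
lemma lag_integrable (α : ℝ) (hα : 0 < α) (p : ℝ[X]) :
    IntegrableOn (fun x : ℝ => x ^ (α - 1) * Real.exp (-x) * p.eval x) (Set.Ioi 0) := by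
  induction p using Polynomial.induction_on' with
  | add p q hp hq =>
    simp only [eval_add, mul_add]
    exact hp.add hq
  | monomial k c =>
    have h := (Real.GammaIntegral_convergent (s := α + k) (by positivity)).const_mul c
    refine IntegrableOn.congr_fun h ?_ measurableSet_Ioi
    intro x hx
    have hx' : (0 : ℝ) < x := hx
    simp only [eval_monomial]
    rw [show α + k - 1 = (α - 1) + k by ring, Real.rpow_add hx', Real.rpow_natCast]
    ring

open Polynomial in
/-- the moment functional -/
noncomputable def lagI (α : ℝ) (hα : 0 < α) : ℝ[X] →ₗ[ℝ] ℝ where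
  toFun p := ∫ x in Set.Ioi (0 : ℝ), x ^ (α - 1) * Real.exp (-x) * p.eval x
  map_add' p q := by
    simp only [eval_add, mul_add]
    exact integral_add (lag_integrable α hα p) (lag_integrable α hα q)
  map_smul' c p := by
    simp only [eval_smul, smul_eq_mul, RingHom.id_apply]
    rw [← integral_const_mul]
    congr 1
    ext x
    ring

open Polynomial in
lemma lagI_X_pow (α : ℝ) (hα : 0 < α) (k : ℕ) :
    lagI α hα (X ^ k) = Real.Gamma (α + k) := by
  rw [Real.Gamma_eq_integral (by positivity)]
  refine setIntegral_congr_fun measurableSet_Ioi ?_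
  intro x hx
  have hx' : (0 : ℝ) < x := hx
  simp only [eval_pow, eval_X]
  rw [show α + k - 1 = (α - 1) + k by ring, Real.rpow_add hx', Real.rpow_natCast]
  ring

/-- Laguerre coefficients -/
noncomputable def lagC (a : ℝ) (n k : ℕ) : ℝ :=
  (-1) ^ k * (n.choose k : ℝ) * Real.Gamma (n + a + 1) / (n.factorial * Real.Gamma (k + a + 1))

open Polynomial in
/-- Laguerre polynomial as a polynomial -/
noncomputable def lagP (a : ℝ) (n : ℕ) : ℝ[X] :=
  ∑ k ∈ Finset.range (n + 1), lagC a n k • X ^ k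

open Polynomial in
lemma lagP_coeff (a : ℝ) (n k : ℕ) : (lagP a n).coeff k = lagC a n k := by
  simp only [lagP, finsetSum_coeff, coeff_smul, coeff_X_pow, smul_eq_mul, mul_ite, mul_one,
    mul_zero]
  rw [Finset.sum_ite_eq]
  split_ifs with h
  · rfl
  · have : n < k := by simpa using h
    simp [lagC, Nat.choose_eq_zero_of_lt this]

open Polynomial in
lemma lagP_natDegree (a : ℝ) (n : ℕ) : (lagP a n).natDegree ≤ n := by
  rw [natDegree_le_iff_coeff_eq_zero]
  intro k hk
  rw [lagP_coeff]
  simp [lagC, Nat.choose_eq_zero_of_lt hk]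

lemma lagP_succ (α : ℝ) (hα : 0 < α) (n : ℕ) :
    lagP α (n + 1) = lagP α n + lagP (α - 1) (n + 1) := by
  ext k
  simp only [Polynomial.coeff_add, lagP_coeff, lagC]
  have h1 : ((n.choose k : ℕ) : ℝ) * (n + 1) = ((n + 1).choose k : ℝ) * (n + 1 - k) := by
    rcases le_or_gt k (n + 1) with h | h
    · have := Nat.choose_mul_succ_eq n k
      have h2 := congrArg (Nat.cast : ℕ → ℝ) this
      push_cast [Nat.cast_sub h] at h2
      exact h2
    · simp [Nat.choose_eq_zero_of_lt h, Nat.choose_eq_zero_of_lt (show n < k by omega)]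
  have g1 : Real.Gamma ((n + 1 : ℕ) + α + 1) = (n + 1 + α) * Real.Gamma (n + α + 1) := by
    rw [Real.Gamma_add_one (by positivity)]; push_cast; congr 2; ring
  have g2 : Real.Gamma (k + α + 1) = (k + α) * Real.Gamma (k + α) := by
    rw [Real.Gamma_add_one (by positivity)]
  have g3 : Real.Gamma ((n + 1 : ℕ) + (α - 1) + 1) = Real.Gamma (n + α + 1) := by
    congr 1; push_cast; ring
  have g4 : Real.Gamma (k + (α - 1) + 1) = Real.Gamma (k + α) := by
    congr 1; ring
  have p1 : Real.Gamma (k + α) ≠ 0 := (Real.Gamma_pos_of_pos (by positivity)).ne'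
  have p2 : (k + α : ℝ) ≠ 0 := by positivity
  have p3 : (n.factorial : ℝ) ≠ 0 := by positivity
  have p4 : (n + 1 : ℝ) ≠ 0 := by positivity
  rw [g1, g2, g3, g4, Nat.factorial_succ]
  have h3 : (n.choose k : ℝ) = ((n + 1).choose k : ℝ) * (n + 1 - k) / (n + 1) := by
    rw [← h1]; field_simp
  rw [h3]
  push_cast
  field_simp
  ring

lemma lag_gamma_asc (z : ℝ) (hz : 0 < z) (j : ℕ) :
    Real.Gamma (z + j) = (ascPochhammer ℝ j).eval z * Real.Gamma z := by
  induction j with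
  | zero => simp
  | succ j ih =>
    rw [Nat.cast_succ, ← add_assoc, Real.Gamma_add_one (by positivity), ih,
      ascPochhammer_succ_right]
    simp
    ring

open Polynomial in
lemma lag_fwd (j n : ℕ) (hj : j ≤ n) (y : ℝ) :
    ∑ k ∈ Finset.range (n + 1), (-1 : ℝ) ^ k * (n.choose k : ℝ) * (ascPochhammer ℝ j).eval (y + k)
      = if j = n then (-1) ^ n * (n.factorial : ℝ) else 0 := by
  have h := fwdDiff_iter_eq_sum_shift (1 : ℝ) (ascPochhammer ℝ j).eval n y
  have h2 : ∑ k ∈ Finset.range (n + 1), (-1 : ℝ) ^ k * (n.choose k : ℝ) *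
      (ascPochhammer ℝ j).eval (y + k) = (-1) ^ n * ((fwdDiff (1 : ℝ))^[n] (fun x => (ascPochhammer ℝ j).eval x) y) := by
    rw [h, Finset.mul_sum]
    refine Finset.sum_congr rfl fun k hk => ?_
    have hk' : k ≤ n := by simpa [Nat.lt_succ_iff] using hk
    obtain ⟨m, rfl⟩ := Nat.exists_eq_add_of_le hk'
    simp only [Nat.add_sub_cancel_left, zsmul_eq_mul, nsmul_eq_mul, mul_one]
    push_cast
    have : ((-1 : ℝ) ^ m) * (-1) ^ m = 1 := by rw [← mul_pow]; simp
    rw [pow_add]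
    linear_combination (-(-1 : ℝ) ^ k * ((k + m).choose k : ℝ) *
      (ascPochhammer ℝ j).eval (y + k)) * this
  rw [h2]
  split_ifs with hjn
  · subst hjn
    have h3 := Polynomial.fwdDiff_iter_degree_eq_factorial (ascPochhammer ℝ j)
    rw [ascPochhammer_natDegree, (monic_ascPochhammer ℝ j).leadingCoeff] at h3
    rw [h3]
    simp
  · rw [Polynomial.fwdDiff_iter_eq_zero_of_degree_lt]
    · simp
    · rw [ascPochhammer_natDegree]; omega

open Polynomial in
lemma lagI_orth_X (α : ℝ) (hα : 0 < α) (n j : ℕ) (hj : j ≤ n) :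
    lagI α hα (lagP (α - 1) n * X ^ j) =
      if j = n then (-1) ^ n * Real.Gamma (n + α) else 0 := by
  have hs : lagI α hα (lagP (α - 1) n * X ^ j) = Real.Gamma (n + α) / n.factorial *
      ∑ k ∈ Finset.range (n + 1),
        (-1 : ℝ) ^ k * (n.choose k : ℝ) * (ascPochhammer ℝ j).eval (α + k) := by
    rw [lagP, Finset.sum_mul, map_sum, Finset.mul_sum]
    refine Finset.sum_congr rfl fun k _ => ?_
    rw [smul_mul_assoc, ← pow_add, map_smul, lagI_X_pow, Nat.cast_add, ← add_assoc,
      lag_gamma_asc _ (by positivity), lagC, smul_eq_mul]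
    have p1 : Real.Gamma (α + k) ≠ 0 := (Real.Gamma_pos_of_pos (by positivity)).ne'
    rw [show (k : ℝ) + (α - 1) + 1 = α + k by ring, show (n : ℝ) + (α - 1) + 1 = n + α by ring]
    field_simp
  rw [hs, lag_fwd j n hj]
  split_ifs
  · field_simp
  · simp

open Polynomial in
lemma lagI_orth (α : ℝ) (hα : 0 < α) (n : ℕ) (p : ℝ[X]) (hp : p.natDegree ≤ n) :
    lagI α hα (lagP (α - 1) n * p) = (-1) ^ n * Real.Gamma (n + α) * p.coeff n := by
  conv_lhs => rw [p.as_sum_range' (n + 1) (by omega)]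
  rw [Finset.mul_sum, map_sum, Finset.sum_eq_single n]
  · rw [← C_mul_X_pow_eq_monomial, ← smul_eq_C_mul, mul_smul_comm, map_smul,
      lagI_orth_X α hα n n le_rfl, if_pos rfl, smul_eq_mul]
    ring
  · intro j hj hjn
    rw [← C_mul_X_pow_eq_monomial, ← smul_eq_C_mul, mul_smul_comm, map_smul,
      lagI_orth_X α hα n j (by simpa [Nat.lt_succ_iff] using hj), if_neg hjn, smul_zero]
  · intro h
    simp at h

lemma lagC_top (a : ℝ) (ha : -1 < a) (n : ℕ) : lagC a n n = (-1) ^ n / n.factorial := by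
  have h0 : (0 : ℝ) ≤ n := Nat.cast_nonneg n
  have p1 : Real.Gamma (n + a + 1) ≠ 0 := (Real.Gamma_pos_of_pos (by linarith)).ne'
  rw [lagC, Nat.choose_self]
  field_simp
  simp

lemma lagI_sq (α : ℝ) (hα : 0 < α) (n : ℕ) :
    lagI α hα (lagP α n ^ 2) =
      ∑ i ∈ Finset.range (n + 1), Real.Gamma ((i : ℝ) + α) / Real.Gamma ((i : ℝ) + 1) := by
  induction n with
  | zero =>
    have h0 : lagP α 0 = 1 := by
      have p1 : Real.Gamma (α + 1) ≠ 0 := (Real.Gamma_pos_of_pos (by positivity)).ne'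
      simp [lagP, lagC, p1]
    have := lagI_X_pow α hα 0
    rw [pow_zero] at this
    simp [h0, this]
  | succ n ih =>
    rw [Finset.sum_range_succ, ← ih]
    have e : lagP α (n + 1) ^ 2 = lagP α n ^ 2 +
        lagP (α - 1) (n + 1) * (lagP α n + lagP α n + lagP (α - 1) (n + 1)) := by
      rw [lagP_succ α hα]; ring
    have d1 := lagP_natDegree α n
    have d2 := lagP_natDegree (α - 1) (n + 1)
    rw [e, map_add, lagI_orth]
    · simp only [Polynomial.coeff_add, lagP_coeff]
      rw [lagC_top _ (by linarith)]
      have z : lagC α n (n + 1) = 0 := by simp [lagC]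
      rw [z, Real.Gamma_nat_eq_factorial]
      have s : ((-1 : ℝ) ^ (n + 1)) * (-1) ^ (n + 1) = 1 := by rw [← mul_pow]; simp
      congr 1
      rw [zero_add, zero_add, mul_div_assoc', mul_right_comm, s, one_mul]
    · refine Polynomial.natDegree_add_le_of_degree_le
        (Polynomial.natDegree_add_le_of_degree_le ?_ ?_) d2 <;> omega

lemma lag_gamma_desc (r : ℝ) (m : ℕ) (h : 0 < r - m + 1) :
    (descPochhammer ℝ m).eval r * Real.Gamma (r - m + 1) = Real.Gamma (r + 1) := by
  induction m with
  | zero => simp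
  | succ m ih =>
    push_cast at h ⊢
    rw [← ih (by linarith), descPochhammer_succ_right,
      show r - m + 1 = (r - (m + 1) + 1) + 1 by ring,
      Real.Gamma_add_one (s := r - (m + 1) + 1) h.ne']
    simp
    ring

lemma laguerre_eq (α : ℝ) (hα : 0 < α) (n : ℕ) (x : ℝ) (hx : 0 < x) :
    laguerre α n x = (lagP α n).eval x := by
  have hd : iteratedDeriv n (fun y : ℝ => Real.exp (-y) * y ^ ((n : ℝ) + α)) x =
      ∑ k ∈ Finset.range (n + 1), n.choose k * iteratedDeriv k (fun y : ℝ => Real.exp (-y)) x *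
        iteratedDeriv (n - k) (fun y : ℝ => y ^ ((n : ℝ) + α)) x := by
    refine iteratedDeriv_mul (f := fun y : ℝ => Real.exp (-y))
      (g := fun y : ℝ => y ^ ((n : ℝ) + α)) ?_ ?_
    · exact (Real.contDiff_exp.comp contDiff_neg).contDiffAt
    · exact Real.contDiffAt_rpow_const_of_ne hx.ne'
  rw [laguerre, hd, lagP, Polynomial.eval_finsetSum, Finset.mul_sum]
  refine Finset.sum_congr rfl fun k hk => ?_
  have hk' : k ≤ n := by simpa [Nat.lt_succ_iff] using hk
  rw [iteratedDeriv_comp_neg k Real.exp x, iteratedDeriv_eq_iterate, iteratedDeriv_eq_iterate,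
    Real.iter_deriv_exp, Real.iter_deriv_rpow_const]
  have g := lag_gamma_desc (n + α) (n - k) (by rw [Nat.cast_sub hk']; ring_nf; positivity)
  rw [Nat.cast_sub hk', show (n : ℝ) + α - (n - k) = k + α by ring] at g ⊢
  have p1 : Real.Gamma (k + α + 1) ≠ 0 := (Real.Gamma_pos_of_pos (by positivity)).ne'
  rw [Polynomial.eval_smul, Polynomial.eval_pow, Polynomial.eval_X, lagC, ← g,
    Real.rpow_add hx, Real.rpow_natCast, Real.rpow_neg hx.le, Real.exp_neg]
  have p2 : x ^ α ≠ 0 := (Real.rpow_pos_of_pos hx α).ne'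
  have p3 : Real.exp x ≠ 0 := (Real.exp_pos x).ne'
  simp only [smul_eq_mul]
  field_simp

/-- For `α > 0` and `n : ℕ`,
`∫₀^∞ x^{α−1} e^{−x} L_n^{(α)}(x)² dx = Σ_{i=0}^{n} Γ(i+α)/Γ(i+1)`;
in particular, for `α ≥ 1` the integral is at most `(n+1)·Γ(n+α)/Γ(n+1)`. -/
theorem laguerre_square_integral (α : ℝ) (hα : 0 < α) (n : ℕ) :
    (∫ x in Set.Ioi (0 : ℝ), x ^ (α - 1) * Real.exp (-x) * (laguerre α n x) ^ 2)
      = ∑ i ∈ Finset.range (n + 1), Real.Gamma ((i : ℝ) + α) / Real.Gamma ((i : ℝ) + 1) ∧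
    (1 ≤ α →
      (∫ x in Set.Ioi (0 : ℝ), x ^ (α - 1) * Real.exp (-x) * (laguerre α n x) ^ 2)
        ≤ ((n : ℝ) + 1) * Real.Gamma ((n : ℝ) + α) / Real.Gamma ((n : ℝ) + 1)) := by
  have key : (∫ x in Set.Ioi (0 : ℝ), x ^ (α - 1) * Real.exp (-x) * (laguerre α n x) ^ 2)
      = ∑ i ∈ Finset.range (n + 1), Real.Gamma ((i : ℝ) + α) / Real.Gamma ((i : ℝ) + 1) := by
    rw [← lagI_sq α hα n]
    refine setIntegral_congr_fun measurableSet_Ioi ?_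
    intro x hx
    simp only [Polynomial.eval_pow]
    rw [laguerre_eq α hα n x hx]
  refine ⟨key, fun h1 => ?_⟩
  rw [key]
  have mono : Monotone (fun i : ℕ => Real.Gamma ((i : ℝ) + α) / Real.Gamma ((i : ℝ) + 1)) := by
    refine monotone_nat_of_le_succ fun i => ?_
    have p1 : 0 < Real.Gamma ((i : ℝ) + α) := Real.Gamma_pos_of_pos (by positivity)
    have p2 : 0 < Real.Gamma ((i : ℝ) + 1) := Real.Gamma_pos_of_pos (by positivity)
    push_cast
    rw [show (i : ℝ) + 1 + α = (i + α) + 1 by ring, Real.Gamma_add_one (s := i + α) (by positivity),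
      Real.Gamma_add_one (s := i + 1) (by positivity), div_le_div_iff₀ p2 (by positivity)]
    have := mul_le_mul_of_nonneg_right (show (i : ℝ) + 1 ≤ i + α by linarith) (mul_pos p1 p2).le
    linarith
  refine (Finset.sum_le_card_nsmul _ _ (Real.Gamma ((n : ℝ) + α) / Real.Gamma ((n : ℝ) + 1))
    fun i hi => mono (by simpa [Nat.lt_succ_iff] using hi)).trans (le_of_eq ?_)
  rw [Finset.card_range, nsmul_eq_mul, mul_div_assoc]
  push_cast
  rfl
end

section
/- Let p be a prime and h an integer with p ∤ h. Let S = { (a,b;c,d) ∈ SL₂(ℤ) : p ∤ a, p ∤ b, p ∤ c, p ∤ d }, a set stable under left multiplication by Γ₂(p,p). The map S → (ℤ/pℤ)², (a,b;c,d) ↦ (−h·a·d mod p, −h·a·c mod p), is constant on Γ₂(p,p)-orbits and induces a bijection from the set of Γ₂(p,p)-orbits of S onto { (r,s) ∈ (ℤ/pℤ)² : p ∤ r·(r+h)·s }. -/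
/-- The set `S` of `SL₂(ℤ)` matrices, none of whose entries is divisible by `p`. -/
def Sset (p : ℕ) : Set (Matrix (Fin 2) (Fin 2) ℤ) :=
  {g | g.det = 1 ∧ ¬ (p : ℤ) ∣ g 0 0 ∧ ¬ (p : ℤ) ∣ g 0 1 ∧
        ¬ (p : ℤ) ∣ g 1 0 ∧ ¬ (p : ℤ) ∣ g 1 1}

/-- The map `(a,b;c,d) ↦ (−h·a·d mod p, −h·a·c mod p)`. -/
def orbitMap (p : ℕ) (h : ℤ) (g : Matrix (Fin 2) (Fin 2) ℤ) : ZMod p × ZMod p :=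
  (((-h * g 0 0 * g 1 1 : ℤ) : ZMod p), ((-h * g 0 0 * g 1 0 : ℤ) : ZMod p))

/-- Let `p` be a prime and `h` an integer with `p ∤ h`. The set `S` of
`SL₂(ℤ)` matrices with no entry divisible by `p` is stable under left multiplication by
`Γ₂(p,p)`; the map `(a,b;c,d) ↦ (−h·a·d, −h·a·c) (mod p)` is constant on `Γ₂(p,p)`-orbits and
induces a bijection from the orbit set onto `{(r,s) : p ∤ r(r+h)s}`. -/
theorem orbit_parametrization_mod_p (p : ℕ) (hp : p.Prime) (h : ℤ) (hph : ¬ (p : ℤ) ∣ h) :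
    -- `S` is stable under left multiplication by `Γ₂(p,p)`
    (∀ γ, InGamma2 p p γ → ∀ g ∈ Sset p, γ * g ∈ Sset p) ∧
    -- the map is constant on orbits
    (∀ γ, InGamma2 p p γ → ∀ g ∈ Sset p, orbitMap p h (γ * g) = orbitMap p h g) ∧
    -- it separates orbits: two elements of `S` have the same image iff they lie in the
    -- same `Γ₂(p,p)`-orbit
    (∀ g₁ ∈ Sset p, ∀ g₂ ∈ Sset p,
      (orbitMap p h g₁ = orbitMap p h g₂ ↔ ∃ γ, InGamma2 p p γ ∧ g₂ = γ * g₁)) ∧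
    -- its image is `{(r,s) : p ∤ r(r+h)s}`
    orbitMap p h '' Sset p = {rs : ZMod p × ZMod p | rs.1 * (rs.1 + (h : ZMod p)) * rs.2 ≠ 0} := by
  haveI : Fact p.Prime := ⟨hp⟩
  have hh : (h : ZMod p) ≠ 0 := fun e => hph ((ZMod.intCast_zmod_eq_zero_iff_dvd h p).1 e)
  have key : ∀ γ, InGamma2 p p γ → ∀ g ∈ Sset p,
      γ * g ∈ Sset p ∧ orbitMap p h (γ * g) = orbitMap p h g := by
    rintro γ ⟨hd, h1, h2⟩ g ⟨gd, ga, gb, gc, ge⟩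
    have hdet : (γ * g).det = 1 := by rw [Matrix.det_mul, hd, gd, mul_one]
    rw [Matrix.det_fin_two] at hd
    have hd' := congrArg (Int.cast : ℤ → ZMod p) hd
    rw [← ZMod.intCast_zmod_eq_zero_iff_dvd] at h1 h2 ga gb gc ge
    push_cast at hd'
    rw [h1, h2] at hd'
    have hu : ((γ 0 0 : ℤ) : ZMod p) * (γ 1 1 : ℤ) = 1 := by linear_combination hd'
    have hα := left_ne_zero_of_mul_eq_one hu
    have hδ := right_ne_zero_of_mul_eq_one hu
    refine ⟨⟨hdet, ?_, ?_, ?_, ?_⟩, ?_⟩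
    · rw [← ZMod.intCast_zmod_eq_zero_iff_dvd]
      simp [Matrix.mul_apply, Fin.sum_univ_two, h1, hα, ga]
    · rw [← ZMod.intCast_zmod_eq_zero_iff_dvd]
      simp [Matrix.mul_apply, Fin.sum_univ_two, h1, hα, gb]
    · rw [← ZMod.intCast_zmod_eq_zero_iff_dvd]
      simp [Matrix.mul_apply, Fin.sum_univ_two, h2, hδ, gc]
    · rw [← ZMod.intCast_zmod_eq_zero_iff_dvd]
      simp [Matrix.mul_apply, Fin.sum_univ_two, h2, hδ, ge]
    · simp only [orbitMap, Matrix.mul_apply, Fin.sum_univ_two, Prod.mk.injEq]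
      push_cast
      rw [h1, h2]
      constructor
      · linear_combination (-(h : ZMod p) * (g 0 0 : ℤ) * (g 1 1 : ℤ)) * hu
      · linear_combination (-(h : ZMod p) * (g 0 0 : ℤ) * (g 1 0 : ℤ)) * hu
  refine ⟨fun γ hγ g hg => (key γ hγ g hg).1, fun γ hγ g hg => (key γ hγ g hg).2, ?_, ?_⟩
  · intro g₁ hg₁ g₂ hg₂
    constructor
    · intro heq
      obtain ⟨d1, a1, b1, c1, e1⟩ := hg₁
      obtain ⟨d2, a2, b2, c2, e2⟩ := hg₂
      have hadj : g₁.adjugate * g₁ = 1 := by rw [Matrix.adjugate_mul, d1, one_smul]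
      refine ⟨g₂ * g₁.adjugate, ⟨?_, ?_, ?_⟩, by rw [mul_assoc, hadj, mul_one]⟩
      · have := congrArg Matrix.det hadj
        rw [Matrix.det_mul, d1, mul_one, Matrix.det_one] at this
        rw [Matrix.det_mul, d2, this, mul_one]
      all_goals
        rw [← ZMod.intCast_zmod_eq_zero_iff_dvd] at *
        simp only [orbitMap, Prod.mk.injEq] at heq
        obtain ⟨q1, q2⟩ := heq
        rw [Matrix.det_fin_two] at d1 d2
        have d1' := congrArg (Int.cast : ℤ → ZMod p) d1
        have d2' := congrArg (Int.cast : ℤ → ZMod p) d2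
        push_cast at q1 q2 d1' d2'
        have r1 : ((g₁ 0 0 : ℤ) : ZMod p) * (g₁ 1 1 : ℤ) = (g₂ 0 0 : ℤ) * (g₂ 1 1 : ℤ) :=
          mul_left_cancel₀ (neg_ne_zero.2 hh) (by linear_combination q1)
        have r2 : ((g₁ 0 0 : ℤ) : ZMod p) * (g₁ 1 0 : ℤ) = (g₂ 0 0 : ℤ) * (g₂ 1 0 : ℤ) :=
          mul_left_cancel₀ (neg_ne_zero.2 hh) (by linear_combination q2)
        simp only [Matrix.adjugate_fin_two, Matrix.mul_apply, Fin.sum_univ_two, Matrix.of_apply,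
          Matrix.cons_val_zero, Matrix.cons_val_one, Matrix.cons_val', Matrix.cons_val_fin_one]
        push_cast
      · refine (mul_eq_zero.1 ?_).resolve_left (mul_ne_zero c1 c2)
        linear_combination ((g₁ 0 1 : ℤ) * (g₁ 1 0 : ℤ) : ZMod p) * r2
          + ((g₁ 0 0 : ℤ) * (g₁ 1 0 : ℤ) : ZMod p) * (d1' - d2' - r1)
      · refine (mul_eq_zero.1 ?_).resolve_left a2
        linear_combination ((g₁ 1 0 : ℤ) : ZMod p) * r1 - ((g₁ 1 1 : ℤ) : ZMod p) * r2
    · rintro ⟨γ, hγ, rfl⟩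
      exact (key γ hγ g₁ hg₁).2.symm
  · ext ⟨r, s⟩
    simp only [Set.mem_image, Set.mem_setOf_eq]
    constructor
    · rintro ⟨g, ⟨d1, a1, b1, c1, e1⟩, heq⟩
      rw [← ZMod.intCast_zmod_eq_zero_iff_dvd] at a1 b1 c1 e1
      simp only [orbitMap, Prod.mk.injEq] at heq
      obtain ⟨q1, q2⟩ := heq
      rw [Matrix.det_fin_two] at d1
      have d1' := congrArg (Int.cast : ℤ → ZMod p) d1
      push_cast at q1 q2 d1'
      have : r + h = -h * ((g 0 1 : ℤ) * (g 1 0 : ℤ)) := by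
        linear_combination -q1 - (h : ZMod p) * d1'
      rw [this, ← q1, ← q2]
      simp [hh, a1, b1, c1, e1]
    · intro hne
      have hs : s ≠ 0 := right_ne_zero_of_mul hne
      have hr : r ≠ 0 := left_ne_zero_of_mul (left_ne_zero_of_mul hne)
      have hrh : r + h ≠ 0 := right_ne_zero_of_mul (left_ne_zero_of_mul hne)
      obtain ⟨b, hb⟩ := ZMod.intCast_surjective ((r + (h : ZMod p)) / s)
      obtain ⟨c, hc⟩ := ZMod.intCast_surjective (-s / (h : ZMod p))
      have hd : ((1 + b * c : ℤ) : ZMod p) = -r / h := by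
        push_cast
        rw [hb, hc]
        field_simp
        ring
      refine ⟨!![1, b; c, 1 + b * c], ⟨?_, ?_, ?_, ?_, ?_⟩, ?_⟩
      · rw [Matrix.det_fin_two_of]; ring
      all_goals try rw [← ZMod.intCast_zmod_eq_zero_iff_dvd]
      · simp
      · change (b : ZMod p) ≠ 0
        rw [hb]; exact div_ne_zero hrh hs
      · change (c : ZMod p) ≠ 0
        rw [hc]; exact div_ne_zero (neg_ne_zero.2 hs) hh
      · change ((1 + b * c : ℤ) : ZMod p) ≠ 0
        rw [hd]; exact div_ne_zero (neg_ne_zero.2 hr) hh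
      · change (((-h * 1 * (1 + b * c) : ℤ) : ZMod p), ((-h * 1 * c : ℤ) : ZMod p)) = (r, s)
        rw [Int.cast_mul, hd, Int.cast_mul _ c, hc]
        push_cast
        ext <;> simp only [] <;> field_simp
end
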